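/- For every two-user discrete memoryless interference channel with degraded message sets in which transmitter 1 knows both messages, the region ℛ_in is achievable: ℛ_in ⊆ C^{T₁}_{IFC}, where ℛ_in is the set of all rate pairs (R₁,R₂) such that R₁ ≤ I(V;Y₁) − I(V;U,X₂) and R₂ ≤ I(U,X₂;Y₂) for some finite-valued auxiliary random variables (U,V) with joint distribution factoring as p(u,x₂)·p(v|u,x₂)·p(x₁|v)·P(y₁,y₂|x₁,x₂). -/

import Mathlib

open scoped BigOperators

noncomputable section

/-- Shannon entropy (base 2) of a finitely supported probability vector. -/
def ent {A : Type*} [Fintype A] (p : A → ℝ) : ℝ :=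
  -∑ a, p a * Real.logb 2 (p a)

/-- The distribution (pushforward) of a random variable `f` on a finite
probability space with probability mass function `μ`. -/
def lawOf {Ω A : Type*} [Fintype Ω] [DecidableEq A] (μ : Ω → ℝ) (f : Ω → A) : A → ℝ :=
  fun a => ∑ ω, if f ω = a then μ ω else 0

/-- Shannon entropy (base 2) of a random variable `f` on a finite probability space. -/
def entRV {Ω A : Type*} [Fintype Ω] [Fintype A] [DecidableEq A] (μ : Ω → ℝ) (f : Ω → A) : ℝ :=
  ent (lawOf μ f)

/-- Mutual information `I(f; g)` (base 2) on a finite probability space. -/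
def miRV {Ω A B : Type*} [Fintype Ω] [Fintype A] [Fintype B] [DecidableEq A] [DecidableEq B]
    (μ : Ω → ℝ) (f : Ω → A) (g : Ω → B) : ℝ :=
  entRV μ f + entRV μ g - entRV μ (fun ω => (f ω, g ω))

/-- Conditional mutual information `I(f; g | h)` (base 2) on a finite probability space. -/
def cmiRV {Ω A B C : Type*} [Fintype Ω] [Fintype A] [Fintype B] [Fintype C]
    [DecidableEq A] [DecidableEq B] [DecidableEq C]
    (μ : Ω → ℝ) (f : Ω → A) (g : Ω → B) (h : Ω → C) : ℝ :=
  entRV μ (fun ω => (f ω, h ω)) + entRV μ (fun ω => (g ω, h ω))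
    - entRV μ (fun ω => (f ω, g ω, h ω)) - entRV μ h

/-- A two-user discrete memoryless interference channel with finite input alphabets
`X1`, `X2` and finite output alphabets `Y1`, `Y2`. -/
structure DMIFC (X1 X2 Y1 Y2 : Type) [Fintype X1] [Fintype X2] [Fintype Y1] [Fintype Y2] where
  W : X1 → X2 → Y1 → Y2 → ℝ
  nonneg : ∀ x1 x2 y1 y2, 0 ≤ W x1 x2 y1 y2
  sum_one : ∀ x1 x2, ∑ y1, ∑ y2, W x1 x2 y1 y2 = 1

variable {X1 X2 Y1 Y2 : Type} [Fintype X1] [Fintype X2] [Fintype Y1] [Fintype Y2]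
  [DecidableEq X1] [DecidableEq X2] [DecidableEq Y1] [DecidableEq Y2]

/-- Average probability that receiver 1 decodes its message incorrectly, for a given
code for the IFC with degraded message sets (transmitter 1 knows both messages),
with the messages uniform and independent and the channel used `n` times without feedback. -/
def pe1 (ch : DMIFC X1 X2 Y1 Y2) (n M1 M2 : ℕ)
    (f1 : Fin M1 → Fin M2 → Fin n → X1) (f2 : Fin M2 → Fin n → X2)
    (g1 : (Fin n → Y1) → Fin M1) : ℝ :=
  (1 / (M1 * M2) : ℝ) * ∑ w1 : Fin M1, ∑ w2 : Fin M2, ∑ y1 : Fin n → Y1, ∑ y2 : Fin n → Y2,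
    (∏ i, ch.W (f1 w1 w2 i) (f2 w2 i) (y1 i) (y2 i)) * (if g1 y1 = w1 then 0 else 1)

/-- Average probability that receiver 2 decodes its message incorrectly. -/
def pe2 (ch : DMIFC X1 X2 Y1 Y2) (n M1 M2 : ℕ)
    (f1 : Fin M1 → Fin M2 → Fin n → X1) (f2 : Fin M2 → Fin n → X2)
    (g2 : (Fin n → Y2) → Fin M2) : ℝ :=
  (1 / (M1 * M2) : ℝ) * ∑ w1 : Fin M1, ∑ w2 : Fin M2, ∑ y1 : Fin n → Y1, ∑ y2 : Fin n → Y2,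
    (∏ i, ch.W (f1 w1 w2 i) (f2 w2 i) (y1 i) (y2 i)) * (if g2 y2 = w2 then 0 else 1)

/-- A rate pair `(R1, R2)` is achievable for the IFC with degraded message sets
(transmitter 1 informed) if there are codes of arbitrarily small error probability
whose rates are arbitrarily close to `(R1, R2)`. -/
def AchievableT1 (ch : DMIFC X1 X2 Y1 Y2) (R1 R2 : ℝ) : Prop :=
  ∀ ε : ℝ, 0 < ε → ∃ (n M1 M2 : ℕ) (f1 : Fin M1 → Fin M2 → Fin n → X1)
    (f2 : Fin M2 → Fin n → X2) (g1 : (Fin n → Y1) → Fin M1) (g2 : (Fin n → Y2) → Fin M2),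
    0 < n ∧ 0 < M1 ∧ 0 < M2 ∧
    R1 - ε ≤ Real.logb 2 M1 / n ∧ R2 - ε ≤ Real.logb 2 M2 / n ∧
    pe1 ch n M1 M2 f1 f2 g1 ≤ ε ∧ pe2 ch n M1 M2 f1 f2 g2 ≤ ε

/-- The capacity region `C^{T₁}_{IFC}` of the IFC with degraded message sets
(transmitter 1 knows both messages): the closure of the set of achievable rate pairs. -/
def CapacityT1 (ch : DMIFC X1 X2 Y1 Y2) : Set (ℝ × ℝ) :=
  closure {R : ℝ × ℝ | AchievableT1 ch R.1 R.2}

/-- The joint distribution on `(U, V, X₁, X₂, Y₁, Y₂)` factoring as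
`p(u,x₂) p(v|u,x₂) p(x₁|v) P(y₁,y₂|x₁,x₂)`. -/
def jointIn (ch : DMIFC X1 X2 Y1 Y2) (nU nV : ℕ)
    (pUX2 : Fin nU → X2 → ℝ) (pV : Fin nU → X2 → Fin nV → ℝ) (pX1 : Fin nV → X1 → ℝ) :
    Fin nU × Fin nV × X1 × X2 × Y1 × Y2 → ℝ :=
  fun p =>
    pUX2 p.1 p.2.2.2.1 * pV p.1 p.2.2.2.1 p.2.1 * pX1 p.2.1 p.2.2.1 *
      ch.W p.2.2.1 p.2.2.2.1 p.2.2.2.2.1 p.2.2.2.2.2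

/-- The Gel'fand–Pinsker achievable region `ℛ_in`: all rate pairs `(R₁, R₂)` with
`R₁ ≤ I(V; Y₁) − I(V; U, X₂)` and `R₂ ≤ I(U, X₂; Y₂)` for some finite-valued
auxiliary random variables `(U, V)` whose joint distribution with the inputs and
outputs factors as `p(u,x₂) p(v|u,x₂) p(x₁|v) P(y₁,y₂|x₁,x₂)`. -/
def Rin (ch : DMIFC X1 X2 Y1 Y2) : Set (ℝ × ℝ) :=
  {R | ∃ (nU nV : ℕ) (pUX2 : Fin nU → X2 → ℝ) (pV : Fin nU → X2 → Fin nV → ℝ)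
      (pX1 : Fin nV → X1 → ℝ),
    (∀ u x2, 0 ≤ pUX2 u x2) ∧ (∑ u, ∑ x2, pUX2 u x2) = 1 ∧
    (∀ u x2 v, 0 ≤ pV u x2 v) ∧ (∀ u x2, ∑ v, pV u x2 v = 1) ∧
    (∀ v x1, 0 ≤ pX1 v x1) ∧ (∀ v, ∑ x1, pX1 v x1 = 1) ∧
    R.1 ≤ miRV (jointIn ch nU nV pUX2 pV pX1) (fun p => p.2.1) (fun p => p.2.2.2.2.1)
          - miRV (jointIn ch nU nV pUX2 pV pX1) (fun p => p.2.1) (fun p => (p.1, p.2.2.2.1)) ∧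
    R.2 ≤ miRV (jointIn ch nU nV pUX2 pV pX1) (fun p => (p.1, p.2.2.2.1)) (fun p => p.2.2.2.2.2)}

/-!
Random coding in the style of Gel'fand and Pinsker, with the pair `(U, X₂)` in the role of the
channel state. Message 2 is carried by a codeword `s` drawn from `p(u, x₂)`, and each value of
message 1 owns a bin of about `2 ^ (n I(V; U, X₂))` codewords drawn from the marginal `p(v)`.
Transmitter 1, who knows `s`, picks a word of the bin that looks as if drawn from `p(v | s)`; the
bin is large enough to simulate this law by rejection sampling. Receiver 1 looks for a bin with a
word `v` whose information density with `y₁` exceeds a threshold, receiver 2 does the same with `s`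
and `y₂`, and wrong candidates pass such a test with probability at most the inverse threshold.
Everything is first bounded for one use of an arbitrary channel; applied to blocks, the remaining
terms vanish because the information density of a block is a sum of independent terms, to which the
weak law of large numbers applies.
-/

section FiniteProbability

variable {A B : Type*} [Fintype A] [Fintype B]

/-- Expectation of `F` under the probability mass function `q` on a finite type. -/
def expVal (q F : A → ℝ) : ℝ := ∑ a, q a * F a

open Classical in
/-- Probability of the event `E` under the probability mass function `q`. -/
def prob (q : A → ℝ) (E : A → Prop) : ℝ := expVal q fun a => if E a then 1 else 0

lemma prob_not (q : A → ℝ) (E : A → Prop) [DecidablePred E] :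
    prob q (fun a => ¬ E a) = expVal q fun a => if E a then 0 else 1 := by
  refine congrArg (expVal q) (funext fun a => ?_)
  by_cases h : E a <;> simp only [h, not_true, not_false_iff, if_true, if_false]

lemma expVal_add (q F G : A → ℝ) :
    expVal q (fun a => F a + G a) = expVal q F + expVal q G := by
  simp only [expVal, mul_add, Finset.sum_add_distrib]

lemma expVal_const_mul (q F : A → ℝ) (r : ℝ) :
    expVal q (fun a => r * F a) = r * expVal q F := by
  simp only [expVal, Finset.mul_sum, mul_left_comm]

lemma expVal_mul_const (q F : A → ℝ) (r : ℝ) :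
    expVal q (fun a => F a * r) = expVal q F * r := by
  simp only [expVal, Finset.sum_mul, mul_assoc]

lemma expVal_sum {κ : Type*} (s : Finset κ) (q : A → ℝ) (F : κ → A → ℝ) :
    expVal q (fun a => ∑ k ∈ s, F k a) = ∑ k ∈ s, expVal q (F k) := by
  simp only [expVal, Finset.mul_sum]
  exact Finset.sum_comm

lemma expVal_comm (q : A → ℝ) (r : B → ℝ) (F : A → B → ℝ) :
    expVal q (fun a => expVal r (F a)) = expVal r fun b => expVal q fun a => F a b := by
  simp only [expVal, Finset.mul_sum]
  rw [Finset.sum_comm]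
  simp only [mul_left_comm]

lemma expVal_comp_equiv {μ : A → ℝ} {ν : B → ℝ} (e : A ≃ B) (h : ∀ a, ν (e a) = μ a)
    (F : B → ℝ) : expVal ν F = expVal μ (F ∘ e) := by
  simp only [expVal, ← e.sum_comp, h, Function.comp_apply]

lemma prob_comp_equiv {μ : A → ℝ} {ν : B → ℝ} (e : A ≃ B) (h : ∀ a, ν (e a) = μ a)
    (E : B → Prop) : prob ν E = prob μ fun a => E (e a) :=
  expVal_comp_equiv e h _

variable {q : A → ℝ}

lemma expVal_const (hq : q ∈ stdSimplex ℝ A) (r : ℝ) : expVal q (fun _ => r) = r := by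
  rw [expVal, ← Finset.sum_mul, hq.2, one_mul]

lemma expVal_sub_const (hq : q ∈ stdSimplex ℝ A) (F : A → ℝ) (r : ℝ) :
    expVal q (fun a => F a - r) = expVal q F - r := by
  simp only [expVal, mul_sub, Finset.sum_sub_distrib, ← Finset.sum_mul, hq.2, one_mul]

lemma expVal_const_sub (hq : q ∈ stdSimplex ℝ A) (r : ℝ) (F : A → ℝ) :
    expVal q (fun a => r - F a) = r - expVal q F := by
  simp only [expVal, mul_sub, Finset.sum_sub_distrib, ← Finset.sum_mul, hq.2, one_mul]

lemma expVal_mono_of_support (hq : ∀ a, 0 ≤ q a) {F G : A → ℝ}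
    (h : ∀ a, q a ≠ 0 → F a ≤ G a) : expVal q F ≤ expVal q G := by
  refine Finset.sum_le_sum fun a _ => ?_
  rcases eq_or_ne (q a) 0 with h0 | h0
  · simp only [h0, zero_mul, le_refl]
  · exact mul_le_mul_of_nonneg_left (h a h0) (hq a)

lemma expVal_mono (hq : ∀ a, 0 ≤ q a) {F G : A → ℝ} (h : ∀ a, F a ≤ G a) :
    expVal q F ≤ expVal q G :=
  expVal_mono_of_support hq fun a _ => h a

lemma expVal_nonneg (hq : ∀ a, 0 ≤ q a) {F : A → ℝ} (hF : ∀ a, 0 ≤ F a) : 0 ≤ expVal q F :=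
  Finset.sum_nonneg fun a _ => mul_nonneg (hq a) (hF a)

lemma expVal_le_const (hq : q ∈ stdSimplex ℝ A) {F : A → ℝ} {r : ℝ} (h : ∀ a, F a ≤ r) :
    expVal q F ≤ r :=
  (expVal_mono hq.1 h).trans_eq (expVal_const hq r)

lemma exists_le_expVal (hq : q ∈ stdSimplex ℝ A) (F : A → ℝ) : ∃ a, F a ≤ expVal q F := by
  have hA : (Finset.univ : Finset A).Nonempty := by
    by_contra hempty
    have := hq.2
    rw [Finset.not_nonempty_iff_eq_empty.mp hempty, Finset.sum_empty] at this
    exact zero_ne_one this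
  obtain ⟨a, -, ha⟩ := Finset.exists_min_image Finset.univ F hA
  refine ⟨a, (expVal_const hq (F a)).symm.trans_le ?_⟩
  exact expVal_mono hq.1 fun b => ha b (Finset.mem_univ b)

lemma prob_nonneg (hq : ∀ a, 0 ≤ q a) (E : A → Prop) : 0 ≤ prob q E :=
  expVal_nonneg hq fun a => by split_ifs <;> norm_num

lemma prob_le_one (hq : q ∈ stdSimplex ℝ A) (E : A → Prop) : prob q E ≤ 1 :=
  expVal_le_const hq fun a => by split_ifs <;> norm_num

lemma prob_mono_of_support (hq : ∀ a, 0 ≤ q a) {E E' : A → Prop}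
    (h : ∀ a, q a ≠ 0 → E a → E' a) : prob q E ≤ prob q E' := by
  refine expVal_mono_of_support hq fun a ha => ?_
  by_cases hE : E a
  · simp only [hE, h a ha hE, if_true, le_refl]
  · simp only [hE, if_false]
    split_ifs <;> norm_num

lemma prob_mono (hq : ∀ a, 0 ≤ q a) {E E' : A → Prop} (h : ∀ a, E a → E' a) :
    prob q E ≤ prob q E' :=
  prob_mono_of_support hq fun a _ => h a

lemma prob_or_le (hq : ∀ a, 0 ≤ q a) (E E' : A → Prop) :
    prob q (fun a => E a ∨ E' a) ≤ prob q E + prob q E' := by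
  rw [prob, prob, prob, ← expVal_add]
  refine expVal_mono hq fun a => ?_
  by_cases hE : E a <;> by_cases hE' : E' a <;> simp [hE, hE']

open Classical in
lemma prob_exists_le (hq : ∀ a, 0 ≤ q a) {κ : Type*} (s : Finset κ) (E : κ → A → Prop) :
    prob q (fun a => ∃ k ∈ s, E k a) ≤ ∑ k ∈ s, prob q (E k) := by
  simp only [prob, ← expVal_sum]
  refine expVal_mono hq fun a => ?_
  have h_nonneg : ∀ k ∈ s, (0 : ℝ) ≤ if E k a then 1 else 0 := fun k _ => by
    split_ifs <;> norm_num
  split_ifs with h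
  · obtain ⟨k, hk, hE⟩ := h
    simpa only [hE, if_true] using Finset.single_le_sum h_nonneg hk
  · exact Finset.sum_nonneg h_nonneg

lemma prob_le_abs_le (hq : ∀ a, 0 ≤ q a) (F : A → ℝ) {θ : ℝ} (hθ : 0 < θ) :
    prob q (fun a => θ ≤ |F a|) ≤ expVal q (fun a => F a ^ 2) / θ ^ 2 := by
  rw [div_eq_inv_mul, ← expVal_const_mul]
  refine expVal_mono hq fun a => ?_
  split_ifs with h
  · rw [← div_eq_inv_mul, one_le_div (by positivity)]
    exact sq_le_sq.mpr ((abs_of_pos hθ).trans_le h)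
  · positivity

/-- The joint law of `(a, b)` where `a` has law `q` and, given `a`, `b` has law `κ a`. -/
def compLaw (q : A → ℝ) (κ : A → B → ℝ) : A × B → ℝ := fun p => q p.1 * κ p.1 p.2

lemma expVal_compLaw (q : A → ℝ) (κ : A → B → ℝ) (F : A × B → ℝ) :
    expVal (compLaw q κ) F = expVal q fun a => expVal (κ a) fun b => F (a, b) := by
  simp only [expVal, compLaw, Fintype.sum_prod_type, Finset.mul_sum, mul_assoc]

lemma compLaw_mem_stdSimplex (hq : q ∈ stdSimplex ℝ A) {κ : A → B → ℝ}
    (hκ : ∀ a, κ a ∈ stdSimplex ℝ B) : compLaw q κ ∈ stdSimplex ℝ (A × B) := by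
  refine ⟨fun p => mul_nonneg (hq.1 p.1) ((hκ p.1).1 p.2), ?_⟩
  simp only [compLaw, Fintype.sum_prod_type, ← Finset.mul_sum, (hκ _).2, mul_one, hq.2]

end FiniteProbability

section ProductLaw

variable {ι A : Type*} [Fintype ι]

/-- The law of a family of independent letters, the `i`-th one having law `q i`. -/
def piLaw (q : ι → A → ℝ) : (ι → A) → ℝ := fun c => ∏ i, q i (c i)

variable [Fintype A] {q : ι → A → ℝ}

lemma expVal_piLaw_succ {L : ℕ} (q : Fin (L + 1) → A → ℝ) (F : (Fin (L + 1) → A) → ℝ) :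
    expVal (piLaw q) F =
      expVal (q 0) fun a => expVal (piLaw fun i => q i.succ) fun c => F (Fin.cons a c) := by
  simp only [expVal, piLaw]
  rw [← (Fin.consEquiv fun _ => A).sum_comp, Fintype.sum_prod_type]
  simp only [Fin.consEquiv, Equiv.coe_fn_mk, Fin.prod_univ_succ, Fin.cons_zero, Fin.cons_succ,
    Finset.mul_sum, mul_assoc]

variable [DecidableEq ι]

lemma piLaw_mem_stdSimplex (hq : ∀ i, q i ∈ stdSimplex ℝ A) :
    piLaw q ∈ stdSimplex ℝ (ι → A) := by
  refine ⟨fun c => Finset.prod_nonneg fun i _ => (hq i).1 (c i), ?_⟩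
  simp only [piLaw, ← Fintype.prod_sum, (hq _).2, Finset.prod_const_one]

lemma expVal_piLaw_prod (hq : ∀ i, q i ∈ stdSimplex ℝ A) (s : Finset ι) (h : ι → A → ℝ) :
    expVal (piLaw q) (fun c => ∏ i ∈ s, h i (c i)) = ∏ i ∈ s, expVal (q i) (h i) := by
  have h_factor : ∀ c : ι → A, piLaw q c * ∏ i ∈ s, h i (c i) =
      ∏ i, q i (c i) * if i ∈ s then h i (c i) else 1 := fun c => by
    rw [Finset.prod_mul_distrib, Fintype.prod_ite_mem, piLaw]
  rw [expVal, Finset.sum_congr rfl fun c _ => h_factor c,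
    ← Fintype.prod_sum fun i a => q i a * if i ∈ s then h i a else 1,
    ← Fintype.prod_ite_mem s fun i => expVal (q i) (h i)]
  refine Finset.prod_congr rfl fun i _ => ?_
  split_ifs with hi
  · rfl
  · simp only [mul_one, (hq i).2]

lemma expVal_piLaw_apply (hq : ∀ i, q i ∈ stdSimplex ℝ A) (i : ι) (f : A → ℝ) :
    expVal (piLaw q) (fun c => f (c i)) = expVal (q i) f := by
  simpa only [Finset.prod_singleton] using expVal_piLaw_prod hq {i} fun _ => f

lemma expVal_piLaw_mul (hq : ∀ i, q i ∈ stdSimplex ℝ A) {i j : ι} (hij : i ≠ j) (f g : A → ℝ) :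
    expVal (piLaw q) (fun c => f (c i) * g (c j)) = expVal (q i) f * expVal (q j) g := by
  have h := expVal_piLaw_prod hq {i, j} fun k => if k = i then f else g
  simpa only [Finset.prod_pair hij, if_true, hij.symm, if_false] using h

lemma expVal_piLaw_sum_sq {μ : A → ℝ} (hμ : μ ∈ stdSimplex ℝ A) {G : A → ℝ}
    (hG : expVal μ G = 0) :
    expVal (piLaw fun _ : ι => μ) (fun c => (∑ i, G (c i)) ^ 2) =
      Fintype.card ι * expVal μ fun a => G a ^ 2 := by
  have h_cov : ∀ i j : ι, expVal (piLaw fun _ : ι => μ) (fun c => G (c i) * G (c j)) =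
      if i = j then expVal μ fun a => G a ^ 2 else 0 := fun i j => by
    split_ifs with hij
    · subst hij
      simpa only [← sq] using expVal_piLaw_apply (fun _ => hμ) i fun a => G a ^ 2
    · rw [expVal_piLaw_mul (fun _ => hμ) hij, hG, zero_mul]
  have h_square : ∀ c : ι → A, (∑ i, G (c i)) ^ 2 = ∑ i, ∑ j, G (c i) * G (c j) := fun c => by
    rw [sq, Finset.sum_mul_sum]
  simp only [h_square, expVal_sum, h_cov, Finset.sum_ite_eq, Finset.mem_univ, if_true,
    Finset.sum_const, Finset.card_univ, nsmul_eq_mul]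

end ProductLaw

section WeakLaw

open Filter Topology

variable {Ω : Type*} [Fintype Ω] {μ : Ω → ℝ}

lemma prob_piLaw_abs_sum_sub_le (hμ : μ ∈ stdSimplex ℝ Ω) (F : Ω → ℝ) {θ : ℝ} (hθ : 0 < θ)
    {n : ℕ} (hn : 0 < n) :
    prob (piLaw fun _ : Fin n => μ) (fun ω => n * θ ≤ |∑ i, F (ω i) - n * expVal μ F|) ≤
      expVal μ (fun a => (F a - expVal μ F) ^ 2) / θ ^ 2 / n := by
  have h_centered : expVal μ (fun a => F a - expVal μ F) = 0 := by
    rw [expVal_sub_const hμ, sub_self]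
  have h_sum : ∀ ω : Fin n → Ω,
      ∑ i, F (ω i) - n * expVal μ F = ∑ i, (F (ω i) - expVal μ F) := fun ω => by
    simp only [Finset.sum_sub_distrib, Finset.sum_const, Finset.card_univ, Fintype.card_fin,
      nsmul_eq_mul]
  have hn' : (0 : ℝ) < n := Nat.cast_pos.mpr hn
  simp only [h_sum]
  refine (prob_le_abs_le (piLaw_mem_stdSimplex fun _ => hμ).1 _ (mul_pos hn' hθ)).trans_eq ?_
  rw [expVal_piLaw_sum_sq hμ h_centered, Fintype.card_fin]
  field_simp

lemma tendsto_prob_piLaw_abs_sum_sub (hμ : μ ∈ stdSimplex ℝ Ω) (F : Ω → ℝ) {θ : ℝ}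
    (hθ : 0 < θ) :
    Tendsto (fun n : ℕ => prob (piLaw fun _ : Fin n => μ) fun ω =>
      n * θ ≤ |∑ i, F (ω i) - n * expVal μ F|) atTop (𝓝 0) := by
  refine squeeze_zero' (Eventually.of_forall fun n =>
    prob_nonneg (piLaw_mem_stdSimplex fun _ => hμ).1 _) ?_
    (tendsto_const_div_atTop_nhds_zero_nat
      (expVal μ (fun a => (F a - expVal μ F) ^ 2) / θ ^ 2))
  filter_upwards [eventually_gt_atTop 0] with n hn
  exact prob_piLaw_abs_sum_sub_le hμ F hθ hn

end WeakLaw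

section Law

variable {Ω A B : Type*} [Fintype Ω] [DecidableEq A] [DecidableEq B] {μ : Ω → ℝ}

lemma lawOf_eq_expVal (μ : Ω → ℝ) (f : Ω → A) (a : A) :
    lawOf μ f a = expVal μ fun ω => if f ω = a then 1 else 0 := by
  simp only [lawOf, expVal, mul_ite, mul_one, mul_zero]

lemma lawOf_eq_prob (μ : Ω → ℝ) (f : Ω → A) (a : A) : lawOf μ f a = prob μ fun ω => f ω = a := by
  rw [lawOf_eq_expVal, prob]
  congr!

lemma expVal_lawOf [Fintype A] (μ : Ω → ℝ) (f : Ω → A) (F : A → ℝ) :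
    expVal (lawOf μ f) F = expVal μ fun ω => F (f ω) := by
  simp only [expVal, lawOf, Finset.sum_mul]
  rw [Finset.sum_comm]
  simp only [ite_mul, zero_mul, Finset.sum_ite_eq, Finset.mem_univ, if_true]

lemma sum_lawOf_pair [Fintype A] (μ : Ω → ℝ) (f : Ω → A) (g : Ω → B) (b : B) :
    ∑ a, lawOf μ (fun ω => (f ω, g ω)) (a, b) = lawOf μ g b := by
  simp only [lawOf, Prod.mk.injEq, ite_and]
  rw [Finset.sum_comm]
  simp only [Finset.sum_ite_eq, Finset.mem_univ, if_true]

lemma lawOf_nonneg (hμ : ∀ ω, 0 ≤ μ ω) (f : Ω → A) (a : A) : 0 ≤ lawOf μ f a :=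
  (prob_nonneg hμ _).trans_eq (lawOf_eq_prob μ f a).symm

lemma lawOf_mem_stdSimplex [Fintype A] (hμ : μ ∈ stdSimplex ℝ Ω) (f : Ω → A) :
    lawOf μ f ∈ stdSimplex ℝ A := by
  refine ⟨lawOf_nonneg hμ.1 f, ?_⟩
  simpa only [expVal, mul_one, hμ.2] using expVal_lawOf μ f fun _ => 1

lemma lawOf_pair_le_left (hμ : ∀ ω, 0 ≤ μ ω) (f : Ω → A) (g : Ω → B) (a : A) (b : B) :
    lawOf μ (fun ω => (f ω, g ω)) (a, b) ≤ lawOf μ f a := by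
  simp only [lawOf_eq_prob]
  exact prob_mono hμ fun ω h => congrArg Prod.fst h

lemma lawOf_pair_le_right (hμ : ∀ ω, 0 ≤ μ ω) (f : Ω → A) (g : Ω → B) (a : A) (b : B) :
    lawOf μ (fun ω => (f ω, g ω)) (a, b) ≤ lawOf μ g b := by
  simp only [lawOf_eq_prob]
  exact prob_mono hμ fun ω h => congrArg Prod.snd h

lemma lawOf_pos (hμ : ∀ ω, 0 ≤ μ ω) (f : Ω → A) {ω : Ω} (hω : μ ω ≠ 0) : 0 < lawOf μ f (f ω) := by
  have h_nonneg : ∀ ω' ∈ Finset.univ, 0 ≤ if f ω' = f ω then μ ω' else 0 := fun ω' _ => by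
    split_ifs
    exacts [hμ ω', le_rfl]
  refine ((hμ ω).lt_of_ne' hω).trans_le ?_
  simpa only [lawOf, if_true] using Finset.single_le_sum h_nonneg (Finset.mem_univ ω)

lemma lawOf_comp_equiv {Ω' : Type*} [Fintype Ω'] {ν : Ω' → ℝ} (e : Ω ≃ Ω')
    (h : ∀ ω, ν (e ω) = μ ω) (f : Ω' → A) : lawOf ν f = lawOf μ fun ω => f (e ω) := by
  funext a
  rw [lawOf_eq_prob, lawOf_eq_prob, prob_comp_equiv e h]

lemma miRV_comp_equiv [Fintype A] [Fintype B] {Ω' : Type*} [Fintype Ω'] {ν : Ω' → ℝ} (e : Ω ≃ Ω')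
    (h : ∀ ω, ν (e ω) = μ ω) (f : Ω' → A) (g : Ω' → B) :
    miRV ν f g = miRV μ (fun ω => f (e ω)) fun ω => g (e ω) := by
  simp only [miRV, entRV, lawOf_comp_equiv e h]

variable {ι : Type*} [Fintype ι] [DecidableEq ι]

lemma lawOf_piLaw (μ : Ω → ℝ) (f : Ω → A) (a : ι → A) :
    lawOf (piLaw fun _ => μ) (fun ω i => f (ω i)) a = ∏ i, lawOf μ f (a i) := by
  simp only [lawOf]
  rw [Fintype.prod_sum]
  simp only [Finset.prod_ite_zero, Finset.mem_univ, true_implies, funext_iff, piLaw]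

lemma lawOf_piLaw_pair (μ : Ω → ℝ) (f : Ω → A) (g : Ω → B) (a : ι → A) (b : ι → B) :
    lawOf (piLaw fun _ => μ) (fun ω => (fun i => f (ω i), fun i => g (ω i))) (a, b) =
      ∏ i, lawOf μ (fun ω => (f ω, g ω)) (a i, b i) := by
  have h_pair : ∀ ω : ι → Ω, (fun i => f (ω i), fun i => g (ω i)) = (a, b) ↔
      (fun i => (f (ω i), g (ω i))) = fun i => (a i, b i) := fun ω => by
    simp only [Prod.mk.injEq, funext_iff, forall_and]
  rw [← lawOf_piLaw μ fun ω => (f ω, g ω)]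
  simp only [lawOf, h_pair]

end Law

section InfoDensity

variable {Ω A B : Type*} [Fintype Ω] [DecidableEq A] [DecidableEq B] {μ : Ω → ℝ}

/-- The pointwise information density `log₂ (P(f, g) / (P(f) P(g)))`, whose mean is the mutual
information; it carries no meaning at outcomes of probability zero. -/
def infoDensity (μ : Ω → ℝ) (f : Ω → A) (g : Ω → B) (ω : Ω) : ℝ :=
  Real.logb 2 (lawOf μ (fun ω => (f ω, g ω)) (f ω, g ω) / (lawOf μ f (f ω) * lawOf μ g (g ω)))

/-- The event that `P(a, b) / (P(a) P(b))` exceeds `K`, written without division: the joint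
typicality test of the decoders and the acceptance test of the encoder. -/
def InfoExceeds (μ : Ω → ℝ) (f : Ω → A) (g : Ω → B) (K : ℝ) (a : A) (b : B) : Prop :=
  K * (lawOf μ f a * lawOf μ g b) < lawOf μ (fun ω => (f ω, g ω)) (a, b)

lemma infoExceeds_comp_equiv {Ω' : Type*} [Fintype Ω'] {ν : Ω' → ℝ} (e : Ω ≃ Ω')
    (h : ∀ ω, ν (e ω) = μ ω) (f : Ω' → A) (g : Ω' → B) (K : ℝ) (a : A) (b : B) :
    InfoExceeds ν f g K a b ↔ InfoExceeds μ (fun ω => f (e ω)) (fun ω => g (e ω)) K a b := by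
  simp only [InfoExceeds, lawOf_comp_equiv e h]

lemma infoExceeds_two_rpow_iff (hμ : ∀ ω, 0 ≤ μ ω) (f : Ω → A) (g : Ω → B) (r : ℝ) {ω : Ω}
    (hω : μ ω ≠ 0) :
    InfoExceeds μ f g (2 ^ r) (f ω) (g ω) ↔ r < infoDensity μ f g ω := by
  have hf := lawOf_pos hμ f hω
  have hg := lawOf_pos hμ g hω
  have hfg := lawOf_pos hμ (fun ω => (f ω, g ω)) hω
  rw [infoDensity, Real.lt_logb_iff_rpow_lt one_lt_two (by positivity),
    lt_div_iff₀ (by positivity), InfoExceeds]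

lemma prob_lawOf_infoExceeds_le [Fintype A] (hμ : ∀ ω, 0 ≤ μ ω) (f : Ω → A) (g : Ω → B) {K : ℝ}
    (hK : 0 < K) (b : B) : prob (lawOf μ f) (fun a => InfoExceeds μ f g K a b) ≤ 1 / K := by
  rcases (lawOf_nonneg hμ g b).eq_or_lt with hb | hb
  · have h_false : ∀ a, ¬ InfoExceeds μ f g K a b := fun a => by
      simpa only [InfoExceeds, ← hb, mul_zero, not_lt] using
        (lawOf_pair_le_right hμ f g a b).trans_eq hb.symm
    simp only [prob, h_false, if_false, expVal, mul_zero, Finset.sum_const_zero]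
    positivity
  · rw [le_div_iff₀ hK, ← mul_le_mul_iff_left₀ hb, one_mul]
    calc prob (lawOf μ f) (fun a => InfoExceeds μ f g K a b) * K * lawOf μ g b
        = ∑ a, lawOf μ f a * (open Classical in if InfoExceeds μ f g K a b then 1 else 0) *
            (K * lawOf μ g b) := by
          rw [mul_assoc, prob, expVal, Finset.sum_mul]
      _ ≤ ∑ a, lawOf μ (fun ω => (f ω, g ω)) (a, b) := by
          refine Finset.sum_le_sum fun a _ => ?_
          split_ifs with h
          · rw [mul_one, mul_left_comm]
            exact h.le
          · simpa only [mul_zero, zero_mul] using lawOf_nonneg hμ _ _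
      _ = lawOf μ g b := sum_lawOf_pair μ f g b

lemma expVal_lawOf_mul_div_lawOf_pair_le [Finite A] [Finite B] (hμ : μ ∈ stdSimplex ℝ Ω) (f : Ω → A)
    (g : Ω → B) :
    expVal μ (fun ω => lawOf μ f (f ω) * lawOf μ g (g ω) /
      lawOf μ (fun ω => (f ω, g ω)) (f ω, g ω)) ≤ 1 := by
  have := Fintype.ofFinite A
  have := Fintype.ofFinite B
  have h_nonneg : ∀ p : A × B, 0 ≤ lawOf μ f p.1 * lawOf μ g p.2 := fun p =>
    mul_nonneg (lawOf_nonneg hμ.1 f p.1) (lawOf_nonneg hμ.1 g p.2)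
  calc _ = expVal (lawOf μ fun ω => (f ω, g ω)) fun p =>
          lawOf μ f p.1 * lawOf μ g p.2 / lawOf μ (fun ω => (f ω, g ω)) p := by rw [expVal_lawOf]
    _ ≤ ∑ p : A × B, lawOf μ f p.1 * lawOf μ g p.2 := Finset.sum_le_sum fun p _ => by
        rcases eq_or_ne (lawOf μ (fun ω => (f ω, g ω)) p) 0 with h0 | h0
        · simpa only [h0, zero_mul] using h_nonneg p
        · rw [mul_div_cancel₀ _ h0]
    _ = 1 := by
        rw [Fintype.sum_prod_type, ← Finset.sum_mul_sum, (lawOf_mem_stdSimplex hμ f).2,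
          (lawOf_mem_stdSimplex hμ g).2, one_mul]

variable [Fintype A] [Fintype B]

lemma entRV_eq_expVal (μ : Ω → ℝ) (f : Ω → A) :
    entRV μ f = -expVal μ fun ω => Real.logb 2 (lawOf μ f (f ω)) := by
  rw [entRV, ent, ← expVal_lawOf μ f fun a => Real.logb 2 (lawOf μ f a), expVal]

lemma miRV_eq_expVal_infoDensity (hμ : ∀ ω, 0 ≤ μ ω) (f : Ω → A) (g : Ω → B) :
    miRV μ f g = expVal μ (infoDensity μ f g) := by
  simp only [miRV, entRV_eq_expVal, expVal, ← Finset.sum_neg_distrib, ← Finset.sum_add_distrib,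
    ← Finset.sum_sub_distrib]
  refine Finset.sum_congr rfl fun ω _ => ?_
  rcases eq_or_ne (μ ω) 0 with hω | hω
  · simp only [hω, zero_mul, neg_zero, add_zero, sub_zero]
  · have hf := (lawOf_pos hμ f hω).ne'
    have hg := (lawOf_pos hμ g hω).ne'
    have hfg := (lawOf_pos hμ (fun ω => (f ω, g ω)) hω).ne'
    rw [infoDensity, Real.logb_div hfg (mul_ne_zero hf hg), Real.logb_mul hf hg]
    ring

lemma miRV_nonneg (hμ : μ ∈ stdSimplex ℝ Ω) (f : Ω → A) (g : Ω → B) : 0 ≤ miRV μ f g := by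
  have h_log : ∀ ω, μ ω ≠ 0 → (Real.log 2)⁻¹ * (1 - lawOf μ f (f ω) * lawOf μ g (g ω) /
      lawOf μ (fun ω => (f ω, g ω)) (f ω, g ω)) ≤ infoDensity μ f g ω := fun ω hω => by
    have hf := lawOf_pos hμ.1 f hω
    have hg := lawOf_pos hμ.1 g hω
    have hfg := lawOf_pos hμ.1 (fun ω => (f ω, g ω)) hω
    rw [infoDensity, Real.logb, div_eq_inv_mul (Real.log _), ← inv_div]
    exact mul_le_mul_of_nonneg_left (Real.one_sub_inv_le_log_of_pos (by positivity))
      (inv_nonneg.mpr (Real.log_nonneg one_le_two))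
  rw [miRV_eq_expVal_infoDensity hμ.1]
  refine le_trans ?_ (expVal_mono_of_support hμ.1 h_log)
  rw [expVal_const_mul, expVal_const_sub hμ]
  exact mul_nonneg (inv_nonneg.mpr (Real.log_nonneg one_le_two))
    (sub_nonneg.mpr (expVal_lawOf_mul_div_lawOf_pair_le hμ f g))

end InfoDensity

section Equipartition

open Filter Topology

variable {Ω A B : Type*} [Fintype Ω] [DecidableEq A] [DecidableEq B] {μ : Ω → ℝ}

lemma infoDensity_piLaw {ι : Type*} [Fintype ι] [DecidableEq ι] (hμ : ∀ ω, 0 ≤ μ ω) (f : Ω → A)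
    (g : Ω → B) {ω : ι → Ω}
    (hω : ∀ i, μ (ω i) ≠ 0) :
    infoDensity (piLaw fun _ => μ) (fun ω i => f (ω i)) (fun ω i => g (ω i)) ω =
      ∑ i, infoDensity μ f g (ω i) := by
  simp only [infoDensity, lawOf_piLaw, lawOf_piLaw_pair, ← Finset.prod_mul_distrib,
    ← Finset.prod_div_distrib]
  refine Real.logb_prod _ _ fun i _ => ne_of_gt ?_
  have hf := lawOf_pos hμ f (hω i)
  have hg := lawOf_pos hμ g (hω i)
  have hfg := lawOf_pos hμ (fun ω => (f ω, g ω)) (hω i)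
  positivity

lemma infoExceeds_piLaw_iff {ι : Type*} [Fintype ι] [DecidableEq ι] (hμ : μ ∈ stdSimplex ℝ Ω)
    (f : Ω → A) (g : Ω → B) (r : ℝ) {ω : ι → Ω} (hω : piLaw (fun _ => μ) ω ≠ 0) :
    InfoExceeds (piLaw fun _ => μ) (fun ω i => f (ω i)) (fun ω i => g (ω i)) (2 ^ r)
      (fun i => f (ω i)) (fun i => g (ω i)) ↔ r < ∑ i, infoDensity μ f g (ω i) := by
  rw [← infoDensity_piLaw hμ.1 f g fun i => Finset.prod_ne_zero_iff.mp hω i (Finset.mem_univ i)]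
  exact infoExceeds_two_rpow_iff (piLaw_mem_stdSimplex fun _ => hμ).1 (fun ω i => f (ω i))
    (fun ω i => g (ω i)) r hω

variable [Fintype A] [Fintype B]

lemma tendsto_prob_infoExceeds_of_miRV_lt (hμ : μ ∈ stdSimplex ℝ Ω) (f : Ω → A) (g : Ω → B)
    {r : ℝ} (hr : miRV μ f g < r) :
    Tendsto (fun n : ℕ => prob (piLaw fun _ : Fin n => μ) fun ω =>
      InfoExceeds (piLaw fun _ => μ) (fun ω i => f (ω i)) (fun ω i => g (ω i)) (2 ^ (n * r))
        (fun i => f (ω i)) fun i => g (ω i)) atTop (𝓝 0) := by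
  refine squeeze_zero (fun n => prob_nonneg (piLaw_mem_stdSimplex fun _ => hμ).1 _) (fun n => ?_)
    (tendsto_prob_piLaw_abs_sum_sub hμ (infoDensity μ f g) (sub_pos.mpr hr))
  refine prob_mono_of_support (piLaw_mem_stdSimplex fun _ => hμ).1 fun ω hω h => ?_
  rw [infoExceeds_piLaw_iff hμ f g _ hω] at h
  rw [← miRV_eq_expVal_infoDensity hμ.1, mul_sub]
  exact (sub_le_sub_right h.le _).trans (le_abs_self _)

lemma tendsto_prob_not_infoExceeds_of_lt_miRV (hμ : μ ∈ stdSimplex ℝ Ω) (f : Ω → A) (g : Ω → B)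
    {r : ℝ} (hr : r < miRV μ f g) :
    Tendsto (fun n : ℕ => prob (piLaw fun _ : Fin n => μ) fun ω =>
      ¬ InfoExceeds (piLaw fun _ => μ) (fun ω i => f (ω i)) (fun ω i => g (ω i)) (2 ^ (n * r))
        (fun i => f (ω i)) fun i => g (ω i)) atTop (𝓝 0) := by
  refine squeeze_zero (fun n => prob_nonneg (piLaw_mem_stdSimplex fun _ => hμ).1 _) (fun n => ?_)
    (tendsto_prob_piLaw_abs_sum_sub hμ (infoDensity μ f g) (sub_pos.mpr hr))
  refine prob_mono_of_support (piLaw_mem_stdSimplex fun _ => hμ).1 fun ω hω h => ?_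
  rw [infoExceeds_piLaw_iff hμ f g _ hω, not_lt] at h
  rw [← miRV_eq_expVal_infoDensity hμ.1, mul_sub, abs_sub_comm]
  exact (sub_le_sub_left h _).trans (le_abs_self _)

end Equipartition

section Packing

variable {ι A Y : Type*}

lemma exists_decoder {M : Type*} [Nonempty M] (D : M → Y → Prop) :
    ∃ g : Y → M, ∀ y w, g y ≠ w → ¬ D w y ∨ ∃ w' ≠ w, D w' y := by
  refine ⟨fun y => Classical.epsilon fun w => D w y, fun y w hne => ?_⟩
  by_cases hD : D w y
  · exact Or.inr ⟨_, hne, Classical.epsilon_spec (p := fun w => D w y) ⟨w, hD⟩⟩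
  · exact Or.inl hD

variable [Fintype ι] [DecidableEq ι] [Fintype A] [Fintype Y]

lemma expVal_piLaw_prob_exists_ne_le {q : A → ℝ} (hq : q ∈ stdSimplex ℝ A) {N : A → Y → ℝ}
    (hN : ∀ a, N a ∈ stdSimplex ℝ Y) {D : A → Y → Prop} {κ : ℝ}
    (hD : ∀ y, prob q (fun a => D a y) ≤ κ) (w : ι) :
    expVal (piLaw fun _ : ι => q) (fun c => prob (N (c w)) fun y => ∃ w' ≠ w, D (c w') y) ≤
      (Fintype.card ι - 1) * κ := by
  have h_union : ∀ c : ι → A, prob (N (c w)) (fun y => ∃ w' ≠ w, D (c w') y) ≤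
      ∑ w' ∈ Finset.univ.erase w, prob (N (c w)) (D (c w')) := fun c => by
    simpa only [Finset.mem_erase, Finset.mem_univ, and_true] using
      prob_exists_le (hN (c w)).1 (Finset.univ.erase w) fun w' => D (c w')
  have h_pair : ∀ w' ∈ Finset.univ.erase w,
      expVal (piLaw fun _ : ι => q) (fun c => prob (N (c w)) (D (c w'))) ≤ κ := by
    intro w' hw'
    have h_ne : w ≠ w' := (Finset.ne_of_mem_erase hw').symm
    calc expVal (piLaw fun _ : ι => q) (fun c => prob (N (c w)) (D (c w')))
        = ∑ y, expVal q (fun a => N a y) * prob q fun a => D a y := by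
          classical
          simp only [prob, ← expVal_piLaw_mul (fun _ => hq) h_ne, ← expVal_sum]
          rfl
      _ ≤ ∑ y, expVal q (fun a => N a y) * κ := Finset.sum_le_sum fun y _ =>
          mul_le_mul_of_nonneg_left (hD y) (expVal_nonneg hq.1 fun a => (hN a).1 y)
      _ = κ := by
          simp only [← Finset.sum_mul, ← expVal_sum, (hN _).2, expVal_const hq, one_mul]
  refine (expVal_mono (piLaw_mem_stdSimplex fun _ => hq).1 h_union).trans ?_
  rw [expVal_sum]
  refine (Finset.sum_le_card_nsmul _ _ _ h_pair).trans_eq ?_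
  rw [Finset.card_erase_of_mem (Finset.mem_univ w), Finset.card_univ, nsmul_eq_mul,
    Nat.cast_pred (Fintype.card_pos_iff.mpr ⟨w⟩)]

end Packing

section Covering

variable {A : Type*} {q : A → ℝ}

open Classical in
lemma exists_acceptance_probability (hq : ∀ a, 0 ≤ q a) {r : A → ℝ} (hr : ∀ a, 0 ≤ r a)
    (h_ac : ∀ a, q a = 0 → r a = 0) {K : ℝ} (hK : 0 < K) :
    ∃ α : A → ℝ, (∀ a, 0 ≤ α a) ∧ (∀ a, α a ≤ 1) ∧
      ∀ a, K * (q a * α a) = r a * (1 - if K * q a < r a then 1 else 0) := by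
  refine ⟨fun a => if K * q a < r a then 0 else r a / (K * q a), fun a => ?_, fun a => ?_,
    fun a => ?_⟩ <;> dsimp only <;> split_ifs with h
  · exact le_rfl
  · exact div_nonneg (hr a) (mul_nonneg hK.le (hq a))
  · exact zero_le_one
  · exact div_le_one_of_le₀ (not_lt.mp h) (mul_nonneg hK.le (hq a))
  · simp only [mul_zero, sub_self]
  · rcases eq_or_ne (q a) 0 with h0 | h0
    · simp only [h0, h_ac a h0, zero_mul, mul_zero]
    · field_simp
      ring

variable [Fintype A]

-- The codewords are proposals of a rejection sampler that accepts `a` with probability `α a`: the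
-- cost is at most that of the first accepted proposal, or `1` if all are rejected.
lemma expVal_mul_expVal_piLaw_le (hq : q ∈ stdSimplex ℝ A) {α ψ : A → ℝ} (hα₀ : ∀ a, 0 ≤ α a)
    (hα₁ : ∀ a, α a ≤ 1) (hψ : ∀ a, 0 ≤ ψ a) {L : ℕ} {m : (Fin L → A) → ℝ} (hm : ∀ c, m c ≤ 1)
    (hmψ : ∀ c l, m c ≤ ψ (c l)) :
    expVal q α * expVal (piLaw fun _ : Fin L => q) m ≤
      expVal q (fun a => α a * ψ a) + expVal q α * (1 - expVal q α) ^ L := by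
  have h_mean₀ : 0 ≤ expVal q α := expVal_nonneg hq.1 hα₀
  induction L with
  | zero =>
    have h_cost : 0 ≤ expVal q fun a => α a * ψ a :=
      expVal_nonneg hq.1 fun a => mul_nonneg (hα₀ a) (hψ a)
    have h_le_one := expVal_le_const (piLaw_mem_stdSimplex fun _ : Fin 0 => hq) hm
    rw [pow_zero]
    linarith [mul_le_mul_of_nonneg_left h_le_one h_mean₀]
  | succ L ih =>
    set B := expVal q (fun a => α a * ψ a) + expVal q α * (1 - expVal q α) ^ L with hB
    have h_tail : ∀ a,
        expVal q α * expVal (piLaw fun _ : Fin L => q) (fun c => m (Fin.cons a c)) ≤ B :=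
      fun a => ih (fun c => hm (Fin.cons a c)) fun c l => by
        simpa only [Fin.cons_succ] using hmψ (Fin.cons a c) l.succ
    have h_first : ∀ a, expVal q α *
        expVal (piLaw fun _ : Fin L => q) (fun c => m (Fin.cons a c)) ≤
          expVal q α * (α a * ψ a) + (1 - α a) * B := fun a => by
      have h_head : expVal (piLaw fun _ : Fin L => q) (fun c => m (Fin.cons a c)) ≤ ψ a :=
        expVal_le_const (piLaw_mem_stdSimplex fun _ => hq) fun c => hmψ (Fin.cons a c) 0
      linarith [mul_le_mul_of_nonneg_left h_head (mul_nonneg h_mean₀ (hα₀ a)),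
        mul_le_mul_of_nonneg_left (h_tail a) (sub_nonneg.mpr (hα₁ a))]
    calc expVal q α * expVal (piLaw fun _ : Fin (L + 1) => q) m
        ≤ expVal q fun a => expVal q α * (α a * ψ a) + (1 - α a) * B := by
          rw [expVal_piLaw_succ, ← expVal_const_mul]
          exact expVal_mono hq.1 h_first
      _ = expVal q (fun a => α a * ψ a) + expVal q α * (1 - expVal q α) ^ (L + 1) := by
          rw [expVal_add, expVal_const_mul, expVal_mul_const, expVal_const_sub hq, hB]
          ring

lemma mul_one_sub_pow_le {x : ℝ} (h₀ : 0 ≤ x) (h₁ : x ≤ 1) {n : ℕ} (hn : 0 < n) :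
    x * (1 - x) ^ n ≤ 1 / n := by
  have hn' : (0 : ℝ) < n := Nat.cast_pos.mpr hn
  have h_bernoulli : 1 + n * x ≤ (1 + x) ^ n := one_add_mul_le_pow (by linarith) n
  have h_prod : (1 - x) ^ n * (1 + x) ^ n ≤ 1 := by
    rw [← mul_pow]
    exact pow_le_one₀ (by nlinarith) (by nlinarith)
  rw [le_div_iff₀ hn']
  calc x * (1 - x) ^ n * n = (1 - x) ^ n * (n * x) := by ring
    _ ≤ (1 - x) ^ n * (1 + x) ^ n :=
        mul_le_mul_of_nonneg_left (by linarith) (pow_nonneg (sub_nonneg.mpr h₁) n)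
    _ ≤ 1 := h_prod

lemma expVal_piLaw_le_of_forall_le (hq : q ∈ stdSimplex ℝ A) {r : A → ℝ} (hr : r ∈ stdSimplex ℝ A)
    (h_ac : ∀ a, q a = 0 → r a = 0) {K : ℝ} (hK : 0 < K) {L : ℕ} (hL : 0 < L) {ψ : A → ℝ}
    (hψ : ∀ a, 0 ≤ ψ a) {m : (Fin L → A) → ℝ} (hm : ∀ c, m c ≤ 1) (hmψ : ∀ c l, m c ≤ ψ (c l)) :
    expVal (piLaw fun _ : Fin L => q) m ≤
      expVal r ψ + prob r (fun a => K * q a < r a) + K / L := by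
  classical
  obtain ⟨α, hα₀, hα₁, h_weight⟩ := exists_acceptance_probability hq.1 hr.1 h_ac hK
  have h_mean : K * expVal q α = 1 - prob r fun a => K * q a < r a := by
    rw [prob, ← expVal_const_sub hr, expVal, Finset.mul_sum, expVal]
    exact Finset.sum_congr rfl fun a _ => h_weight a
  have h_cost : K * expVal q (fun a => α a * ψ a) ≤ expVal r ψ := by
    rw [expVal, Finset.mul_sum]
    refine Finset.sum_le_sum fun a _ => ?_
    rw [← mul_assoc (q a), ← mul_assoc, h_weight, mul_assoc]
    refine mul_le_mul_of_nonneg_left (mul_le_of_le_one_left (hψ a) ?_) (hr.1 a)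
    split_ifs <;> norm_num
  have h_sampler := mul_le_mul_of_nonneg_left
    (expVal_mul_expVal_piLaw_le hq hα₀ hα₁ hψ hm hmψ) hK.le
  have h_reject := mul_le_mul_of_nonneg_left
    (mul_one_sub_pow_le (expVal_nonneg hq.1 hα₀) (expVal_le_const hq hα₁) hL) hK.le
  have h_le_one := mul_le_mul_of_nonneg_left
    (expVal_le_const (piLaw_mem_stdSimplex fun _ => hq) hm)
    (prob_nonneg hr.1 fun a => K * q a < r a)
  rw [← mul_assoc, h_mean, mul_add] at h_sampler
  rw [mul_one_div] at h_reject
  linarith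

end Covering

/-- The uniform probability mass function, the law of the messages. -/
def uniformLaw (M : Type*) [Fintype M] : M → ℝ := fun _ => (Fintype.card M : ℝ)⁻¹

lemma uniformLaw_nonneg (M : Type*) [Fintype M] (w : M) : 0 ≤ uniformLaw M w :=
  inv_nonneg.mpr (Nat.cast_nonneg _)

lemma uniformLaw_mem_stdSimplex (M : Type*) [Fintype M] [Nonempty M] :
    uniformLaw M ∈ stdSimplex ℝ M := by
  refine ⟨uniformLaw_nonneg M, ?_⟩
  simp only [uniformLaw]
  rw [Finset.sum_const, Finset.card_univ, nsmul_eq_mul,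
    mul_inv_cancel₀ (Nat.cast_ne_zero.mpr Fintype.card_ne_zero)]

section RandomCoding

variable {A B M : Type*} [Fintype A] [Fintype B] {q : A → ℝ} {r : B → ℝ}

lemma exists_expVal_le_of_forall [Fintype M] (hq : q ∈ stdSimplex ℝ A) (hr : r ∈ stdSimplex ℝ B)
    {u : M → ℝ} (hu : u ∈ stdSimplex ℝ M) {F : A → B → M → ℝ} {β : ℝ}
    (hF : ∀ w, expVal q (fun a => expVal r fun b => F a b w) ≤ β) :
    ∃ a b, expVal u (F a b) ≤ β := by
  obtain ⟨a, ha⟩ := exists_le_expVal hq fun a => expVal r fun b => expVal u (F a b)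
  obtain ⟨b, hb⟩ := exists_le_expVal hr fun b => expVal u (F a b)
  refine ⟨a, b, hb.trans (ha.trans ?_)⟩
  simp only [expVal_comm r u, expVal_comm q u]
  exact expVal_le_const hu hF

variable {M₁ M₂ Y₁ Y₂ : Type*} [Fintype Y₁] [Fintype Y₂]

lemma prob_decoders_ne_le {N : Y₁ × Y₂ → ℝ} (hN : ∀ y, 0 ≤ N y) {D₁ : M₁ → Y₁ → Prop}
    {D₂ : M₂ → Y₂ → Prop} {g₁ : Y₁ → M₁} {g₂ : Y₂ → M₂}
    (hg₁ : ∀ y w, g₁ y ≠ w → ¬ D₁ w y ∨ ∃ w' ≠ w, D₁ w' y)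
    (hg₂ : ∀ y w, g₂ y ≠ w → ¬ D₂ w y ∨ ∃ w' ≠ w, D₂ w' y) (w : M₁ × M₂) :
    prob N (fun y => g₁ y.1 ≠ w.1 ∨ g₂ y.2 ≠ w.2) ≤
      prob N (fun y => ¬ D₁ w.1 y.1 ∨ ¬ D₂ w.2 y.2) +
        prob N (fun y => ∃ w' ≠ w.1, D₁ w' y.1) + prob N (fun y => ∃ w' ≠ w.2, D₂ w' y.2) := by
  have h_events : ∀ y : Y₁ × Y₂, g₁ y.1 ≠ w.1 ∨ g₂ y.2 ≠ w.2 →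
      ((¬ D₁ w.1 y.1 ∨ ¬ D₂ w.2 y.2) ∨ ∃ w' ≠ w.1, D₁ w' y.1) ∨ ∃ w' ≠ w.2, D₂ w' y.2 := by
    rintro y (h | h)
    · exact Or.inl ((hg₁ y.1 w.1 h).imp_left Or.inl)
    · exact (hg₂ y.2 w.2 h).imp_left fun h => Or.inl (Or.inr h)
  refine (prob_mono hN h_events).trans ((prob_or_le hN _ _).trans ?_)
  exact add_le_add_left (prob_or_le hN _ _) _

lemma expVal_piLaw_codebooks_le [Fintype M₁] [Fintype M₂] [DecidableEq M₁] [DecidableEq M₂]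
    (hq : q ∈ stdSimplex ℝ A) (hr : r ∈ stdSimplex ℝ B) {N : A → B → Y₁ × Y₂ → ℝ}
    (hN : ∀ a b, N a b ∈ stdSimplex ℝ (Y₁ × Y₂)) {D₁ : A → Y₁ → Prop} {κ₁ : ℝ}
    (hD₁ : ∀ y, prob q (fun a => D₁ a y) ≤ κ₁) {D₂ : B → Y₂ → Prop} {κ₂ : ℝ}
    (hD₂ : ∀ y, prob r (fun b => D₂ b y) ≤ κ₂) (w : M₁ × M₂) :
    expVal (piLaw fun _ : M₁ => q) (fun c₁ => expVal (piLaw fun _ : M₂ => r) fun c₂ =>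
      prob (N (c₁ w.1) (c₂ w.2)) (fun y => ¬ D₁ (c₁ w.1) y.1 ∨ ¬ D₂ (c₂ w.2) y.2) +
        prob (N (c₁ w.1) (c₂ w.2)) (fun y => ∃ w' ≠ w.1, D₁ (c₁ w') y.1) +
        prob (N (c₁ w.1) (c₂ w.2)) (fun y => ∃ w' ≠ w.2, D₂ (c₂ w') y.2)) ≤
      expVal q (fun a => expVal r fun b => prob (N a b) fun y => ¬ D₁ a y.1 ∨ ¬ D₂ b y.2) +
        (Fintype.card M₁ - 1) * κ₁ + (Fintype.card M₂ - 1) * κ₂ := by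
  have hc₁ := piLaw_mem_stdSimplex fun _ : M₁ => hq
  have hc₂ := piLaw_mem_stdSimplex fun _ : M₂ => hr
  simp only [expVal_add]
  refine add_le_add (add_le_add (le_of_eq ?_) ?_) ?_
  · rw [← expVal_piLaw_apply (fun _ => hq) w.1]
    refine congrArg _ (funext fun c₁ => ?_)
    exact expVal_piLaw_apply (fun _ => hr) w.2 fun b =>
      prob (N (c₁ w.1) b) fun y => ¬ D₁ (c₁ w.1) y.1 ∨ ¬ D₂ b y.2
  · rw [expVal_comm]
    exact expVal_le_const hc₂ fun c₂ => expVal_piLaw_prob_exists_ne_le hq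
      (fun a => hN a (c₂ w.2)) (fun y => hD₁ y.1) w.1
  · exact expVal_le_const hc₁ fun c₁ => expVal_piLaw_prob_exists_ne_le hr (hN (c₁ w.1))
      (fun y => hD₂ y.2) w.2

lemma exists_codebooks_of_tests [Fintype M₁] [Fintype M₂] [Nonempty M₁] [Nonempty M₂]
    (hq : q ∈ stdSimplex ℝ A) (hr : r ∈ stdSimplex ℝ B) {N : A → B → Y₁ × Y₂ → ℝ}
    (hN : ∀ a b, N a b ∈ stdSimplex ℝ (Y₁ × Y₂)) {D₁ : A → Y₁ → Prop} {κ₁ : ℝ}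
    (hD₁ : ∀ y, prob q (fun a => D₁ a y) ≤ κ₁) {D₂ : B → Y₂ → Prop} {κ₂ : ℝ}
    (hD₂ : ∀ y, prob r (fun b => D₂ b y) ≤ κ₂) :
    ∃ (c₁ : M₁ → A) (c₂ : M₂ → B) (g₁ : Y₁ → M₁) (g₂ : Y₂ → M₂),
      expVal (uniformLaw (M₁ × M₂)) (fun w => prob (N (c₁ w.1) (c₂ w.2)) fun y =>
        g₁ y.1 ≠ w.1 ∨ g₂ y.2 ≠ w.2) ≤
      expVal q (fun a => expVal r fun b => prob (N a b) fun y => ¬ D₁ a y.1 ∨ ¬ D₂ b y.2) +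
        (Fintype.card M₁ - 1) * κ₁ + (Fintype.card M₂ - 1) * κ₂ := by
  classical
  obtain ⟨c₁, c₂, h_code⟩ := exists_expVal_le_of_forall (piLaw_mem_stdSimplex fun _ : M₁ => hq)
    (piLaw_mem_stdSimplex fun _ : M₂ => hr) (uniformLaw_mem_stdSimplex (M₁ × M₂))
    (expVal_piLaw_codebooks_le hq hr hN hD₁ hD₂)
  obtain ⟨g₁, hg₁⟩ := exists_decoder fun w y => D₁ (c₁ w) y
  obtain ⟨g₂, hg₂⟩ := exists_decoder fun w y => D₂ (c₂ w) y
  refine ⟨c₁, c₂, g₁, g₂, le_trans ?_ h_code⟩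
  exact expVal_mono (uniformLaw_mem_stdSimplex _).1 fun w =>
    prob_decoders_ne_le (hN (c₁ w.1) (c₂ w.2)).1 hg₁ hg₂ w

end RandomCoding

section OneShot

variable {S V 𝒳₁ 𝒳₂ 𝒴₁ 𝒴₂ : Type} [Fintype S] [Fintype V] [Fintype 𝒳₁] [Fintype 𝒳₂]
  [Fintype 𝒴₁] [Fintype 𝒴₂]

/-- The law of the pair of channel outputs given the two inputs. -/
def DMIFC.out (ch : DMIFC 𝒳₁ 𝒳₂ 𝒴₁ 𝒴₂) (x₁ : 𝒳₁) (x₂ : 𝒳₂) : 𝒴₁ × 𝒴₂ → ℝ :=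
  fun y => ch.W x₁ x₂ y.1 y.2

lemma DMIFC.out_mem_stdSimplex (ch : DMIFC 𝒳₁ 𝒳₂ 𝒴₁ 𝒴₂) (x₁ : 𝒳₁) (x₂ : 𝒳₂) :
    ch.out x₁ x₂ ∈ stdSimplex ℝ (𝒴₁ × 𝒴₂) :=
  ⟨fun y => ch.nonneg x₁ x₂ y.1 y.2, by
    simpa only [out, Fintype.sum_prod_type] using ch.sum_one x₁ x₂⟩

/-- The probability, averaged over the messages, that one of the two receivers decodes incorrectly
in a single use of `ch`; block codes are single-use codes for `DMIFC.memoryless`. -/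
def DMIFC.avgError {M₁ M₂ : Type*} [Fintype M₁] [Fintype M₂] (ch : DMIFC 𝒳₁ 𝒳₂ 𝒴₁ 𝒴₂)
    (f₁ : M₁ → M₂ → 𝒳₁) (f₂ : M₂ → 𝒳₂) (g₁ : 𝒴₁ → M₁) (g₂ : 𝒴₂ → M₂) : ℝ :=
  expVal (uniformLaw (M₁ × M₂)) fun w =>
    prob (ch.out (f₁ w.1 w.2) (f₂ w.2)) fun y => g₁ y.1 ≠ w.1 ∨ g₂ y.2 ≠ w.2

/-- The input distribution of a Gel'fand–Pinsker code: `s` has law `pS`, given `s` the auxiliary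
letter `v` has law `pV s`, transmitter 1 sends a letter of law `pX₁ v` and transmitter 2 sends
`x₂ s`. In `ℛ_in` the state `s` is the pair `(u, x₂)`. -/
structure TestChannel (S V 𝒳₁ 𝒳₂ : Type) [Fintype S] [Fintype V] [Fintype 𝒳₁] where
  pS : S → ℝ
  pV : S → V → ℝ
  pX₁ : V → 𝒳₁ → ℝ
  x₂ : S → 𝒳₂
  pS_mem : pS ∈ stdSimplex ℝ S
  pV_mem : ∀ s, pV s ∈ stdSimplex ℝ V
  pX₁_mem : ∀ v, pX₁ v ∈ stdSimplex ℝ 𝒳₁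

namespace TestChannel

variable (tc : TestChannel S V 𝒳₁ 𝒳₂) (ch : DMIFC 𝒳₁ 𝒳₂ 𝒴₁ 𝒴₂)

/-- The joint law of `(s, v, x₁, y₁, y₂)` when the test channel feeds the interference channel. -/
def joint : S × V × 𝒳₁ × 𝒴₁ × 𝒴₂ → ℝ :=
  compLaw tc.pS fun s => compLaw (tc.pV s) fun v => compLaw (tc.pX₁ v) fun x => ch.out x (tc.x₂ s)

lemma joint_mem_stdSimplex : tc.joint ch ∈ stdSimplex ℝ (S × V × 𝒳₁ × 𝒴₁ × 𝒴₂) :=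
  compLaw_mem_stdSimplex tc.pS_mem fun s => compLaw_mem_stdSimplex (tc.pV_mem s) fun v =>
    compLaw_mem_stdSimplex (tc.pX₁_mem v) fun x => ch.out_mem_stdSimplex x (tc.x₂ s)

lemma expVal_joint (F : S × V × 𝒳₁ × 𝒴₁ × 𝒴₂ → ℝ) :
    expVal (tc.joint ch) F = expVal tc.pS fun s => expVal (tc.pV s) fun v =>
      expVal (tc.pX₁ v) fun x => expVal (ch.out x (tc.x₂ s)) fun y => F (s, v, x, y) := by
  simp only [joint, expVal_compLaw]

lemma exists_encoder {q : V → ℝ} (hq : q ∈ stdSimplex ℝ V)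
    (h_ac : ∀ s v, tc.pS s ≠ 0 → q v = 0 → tc.pV s v = 0) {K : ℝ} (hK : 0 < K) {L : ℕ}
    (hL : 0 < L) (D₁ : V → 𝒴₁ → Prop) (D₂ : S → 𝒴₂ → Prop) :
    ∃ enc : (Fin L → V) → S → 𝒳₁,
      expVal tc.pS (fun s => expVal (piLaw fun _ => q) fun c =>
        prob (ch.out (enc c s) (tc.x₂ s)) fun y => (¬ ∃ l, D₁ (c l) y.1) ∨ ¬ D₂ s y.2) ≤
      prob (tc.joint ch) (fun p => ¬ D₁ p.2.1 p.2.2.2.1 ∨ ¬ D₂ p.1 p.2.2.2.2) +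
        prob (compLaw tc.pS tc.pV) (fun p => K * q p.2 < tc.pV p.1 p.2) + K / L := by
  obtain ⟨p, -⟩ := exists_le_expVal (tc.joint_mem_stdSimplex ch) 0
  have : Nonempty 𝒳₁ := ⟨p.2.2.1⟩
  have h_best : ∀ (c : Fin L → V) (s : S), ∃ x, ∀ x',
      prob (ch.out x (tc.x₂ s)) (fun y => (¬ ∃ l, D₁ (c l) y.1) ∨ ¬ D₂ s y.2) ≤
        prob (ch.out x' (tc.x₂ s)) (fun y => (¬ ∃ l, D₁ (c l) y.1) ∨ ¬ D₂ s y.2) := fun c s =>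
    Finite.exists_min _
  choose enc h_enc using h_best
  refine ⟨enc, ?_⟩
  have h_cost : ∀ c s l,
      prob (ch.out (enc c s) (tc.x₂ s)) (fun y => (¬ ∃ l, D₁ (c l) y.1) ∨ ¬ D₂ s y.2) ≤
        expVal (tc.pX₁ (c l)) fun x =>
          prob (ch.out x (tc.x₂ s)) fun y => ¬ D₁ (c l) y.1 ∨ ¬ D₂ s y.2 := fun c s l => by
    rw [← expVal_const (tc.pX₁_mem (c l)) (prob (ch.out (enc c s) _) _)]
    refine expVal_mono (tc.pX₁_mem (c l)).1 fun x => (h_enc c s x).trans ?_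
    exact prob_mono (ch.out_mem_stdSimplex _ _).1 fun y => Or.imp_left (mt fun h => ⟨l, h⟩)
  have h_cover : ∀ s, tc.pS s ≠ 0 → _ := fun s hs =>
    expVal_piLaw_le_of_forall_le hq (tc.pV_mem s) (fun v => h_ac s v hs) hK hL
      (fun v => expVal_nonneg (tc.pX₁_mem v).1 fun x =>
        prob_nonneg (ch.out_mem_stdSimplex x (tc.x₂ s)).1 fun y => ¬ D₁ v y.1 ∨ ¬ D₂ s y.2)
      (fun c => prob_le_one (ch.out_mem_stdSimplex (enc c s) (tc.x₂ s)) _) fun c => h_cost c s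
  refine (expVal_mono_of_support tc.pS_mem.1 h_cover).trans_eq ?_
  rw [expVal_add, expVal_add, expVal_const tc.pS_mem]
  simp only [prob, expVal_joint, expVal_compLaw]

end TestChannel

lemma TestChannel.exists_code_of_tests (tc : TestChannel S V 𝒳₁ 𝒳₂) (ch : DMIFC 𝒳₁ 𝒳₂ 𝒴₁ 𝒴₂)
    (M₁ M₂ : Type*) [Fintype M₁] [Fintype M₂] [Nonempty M₁] [Nonempty M₂]
    {q : V → ℝ} (hq : q ∈ stdSimplex ℝ V)
    (h_ac : ∀ s v, tc.pS s ≠ 0 → q v = 0 → tc.pV s v = 0) {K : ℝ} (hK : 0 < K) {L : ℕ}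
    (hL : 0 < L) {D₁ : V → 𝒴₁ → Prop} {κ₁ : ℝ} (hD₁ : ∀ y, prob q (fun v => D₁ v y) ≤ κ₁)
    {D₂ : S → 𝒴₂ → Prop} {κ₂ : ℝ} (hD₂ : ∀ y, prob tc.pS (fun s => D₂ s y) ≤ κ₂) :
    ∃ (f₁ : M₁ → M₂ → 𝒳₁) (f₂ : M₂ → 𝒳₂) (g₁ : 𝒴₁ → M₁) (g₂ : 𝒴₂ → M₂),
      ch.avgError f₁ f₂ g₁ g₂ ≤
        prob (tc.joint ch) (fun p => ¬ D₁ p.2.1 p.2.2.2.1 ∨ ¬ D₂ p.1 p.2.2.2.2) +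
          prob (compLaw tc.pS tc.pV) (fun p => K * q p.2 < tc.pV p.1 p.2) + K / L +
          (Fintype.card M₁ - 1) * (L * κ₁) + (Fintype.card M₂ - 1) * κ₂ := by
  have hc := piLaw_mem_stdSimplex fun _ : Fin L => hq
  obtain ⟨enc, h_enc⟩ := tc.exists_encoder ch hq h_ac hK hL D₁ D₂
  have h_bin : ∀ y, prob (piLaw fun _ : Fin L => q) (fun c => ∃ l, D₁ (c l) y) ≤ L * κ₁ :=
    fun y => by
      have h_letter : ∀ l ∈ Finset.univ,
          prob (piLaw fun _ : Fin L => q) (fun c => D₁ (c l) y) ≤ κ₁ := fun l _ =>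
        (expVal_piLaw_apply (fun _ => hq) l _).trans_le (hD₁ y)
      have h_union := (prob_exists_le hc.1 Finset.univ fun l c => D₁ (c l) y).trans
        (Finset.sum_le_card_nsmul _ _ _ h_letter)
      simpa only [Finset.mem_univ, true_and, Finset.card_univ, Fintype.card_fin,
        nsmul_eq_mul] using h_union
  obtain ⟨cv, cs, g₁, g₂, h_code⟩ := exists_codebooks_of_tests (M₁ := M₁) (M₂ := M₂) hc tc.pS_mem
    (fun c s => ch.out_mem_stdSimplex (enc c s) (tc.x₂ s)) h_bin hD₂
  rw [expVal_comm] at h_code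
  exact ⟨fun w₁ w₂ => enc (cv w₁) (cs w₂), fun w₂ => tc.x₂ (cs w₂), g₁, g₂,
    h_code.trans (add_le_add_left (add_le_add_left h_enc _) _)⟩

end OneShot

section InfoTests

variable {S V 𝒳₁ 𝒳₂ 𝒴₁ 𝒴₂ : Type} [Fintype S] [Fintype V] [Fintype 𝒳₁] [Fintype 𝒳₂]
  [Fintype 𝒴₁] [Fintype 𝒴₂]
  (tc : TestChannel S V 𝒳₁ 𝒳₂) (ch : DMIFC 𝒳₁ 𝒳₂ 𝒴₁ 𝒴₂)

namespace TestChannel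

lemma expVal_joint_state_aux (F : S → V → ℝ) :
    expVal (tc.joint ch) (fun p => F p.1 p.2.1) =
      expVal tc.pS fun s => expVal (tc.pV s) fun v => F s v := by
  simp only [expVal_joint, expVal_const (ch.out_mem_stdSimplex _ _), expVal_const (tc.pX₁_mem _)]

lemma lawOf_joint_state [DecidableEq S] : lawOf (tc.joint ch) (fun p => p.1) = tc.pS := by
  funext s
  rw [lawOf_eq_expVal, tc.expVal_joint_state_aux ch fun s' _ => if s' = s then 1 else 0]
  simp only [expVal_const (tc.pV_mem _)]
  simp only [expVal, mul_ite, mul_one, mul_zero, Finset.sum_ite_eq', Finset.mem_univ, if_true]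

variable [DecidableEq V]

lemma lawOf_joint_aux_state [DecidableEq S] (v : V) (s : S) :
    lawOf (tc.joint ch) (fun p => (p.2.1, p.1)) (v, s) = tc.pS s * tc.pV s v := by
  rw [lawOf_eq_expVal,
    tc.expVal_joint_state_aux ch fun s' v' => if (v', s') = (v, s) then 1 else 0]
  simp only [expVal, Prod.mk.injEq, ite_and, mul_ite, mul_one, mul_zero, Finset.sum_ite_eq',
    Finset.mem_univ, if_true]

lemma pV_eq_zero_of_lawOf_joint_eq_zero {s : S} (hs : tc.pS s ≠ 0) {v : V}
    (hv : lawOf (tc.joint ch) (fun p => p.2.1) v = 0) : tc.pV s v = 0 := by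
  classical
  have h_le := lawOf_pair_le_left (tc.joint_mem_stdSimplex ch).1 (fun p => p.2.1) (fun p => p.1) v
    s
  rw [lawOf_joint_aux_state, hv] at h_le
  exact (mul_eq_zero.mp (h_le.antisymm
    (mul_nonneg (tc.pS_mem.1 s) ((tc.pV_mem s).1 v)))).resolve_left hs

variable [DecidableEq S]

lemma infoExceeds_aux_state_iff {K : ℝ} {s : S} (hs : tc.pS s ≠ 0) (v : V) :
    InfoExceeds (tc.joint ch) (fun p => p.2.1) (fun p => p.1) K v s ↔
      K * lawOf (tc.joint ch) (fun p => p.2.1) v < tc.pV s v := by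
  rw [InfoExceeds, lawOf_joint_state, lawOf_joint_aux_state, ← mul_assoc, mul_comm (tc.pS s),
    mul_lt_mul_iff_left₀ ((tc.pS_mem.1 s).lt_of_ne' hs)]

lemma prob_joint_infoExceeds_aux_state (K : ℝ) :
    prob (tc.joint ch)
        (fun p => InfoExceeds (tc.joint ch) (fun p => p.2.1) (fun p => p.1) K p.2.1 p.1) =
      prob (compLaw tc.pS tc.pV)
        fun p => K * lawOf (tc.joint ch) (fun p => p.2.1) p.2 < tc.pV p.1 p.2 := by
  classical
  rw [prob, tc.expVal_joint_state_aux ch fun s v =>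
    if InfoExceeds (tc.joint ch) (fun p => p.2.1) (fun p => p.1) K v s then 1 else 0,
    prob, expVal_compLaw]
  refine Finset.sum_congr rfl fun s _ => ?_
  rcases eq_or_ne (tc.pS s) 0 with hs | hs
  · simp only [hs, zero_mul]
  · simp only [tc.infoExceeds_aux_state_iff ch hs]

variable [DecidableEq 𝒴₁] [DecidableEq 𝒴₂]

lemma exists_code_avgError_le (M₁ M₂ : Type*) [Fintype M₁] [Fintype M₂] [Nonempty M₁] [Nonempty M₂]
    {K K₁ K₂ : ℝ} (hK : 0 < K) (hK₁ : 0 < K₁) (hK₂ : 0 < K₂) {L : ℕ} (hL : 0 < L) :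
    ∃ (f₁ : M₁ → M₂ → 𝒳₁) (f₂ : M₂ → 𝒳₂) (g₁ : 𝒴₁ → M₁) (g₂ : 𝒴₂ → M₂),
      ch.avgError f₁ f₂ g₁ g₂ ≤
        prob (tc.joint ch) (fun p => ¬ InfoExceeds (tc.joint ch) (fun p => p.2.1)
          (fun p => p.2.2.2.1) K₁ p.2.1 p.2.2.2.1) +
        prob (tc.joint ch) (fun p => ¬ InfoExceeds (tc.joint ch) (fun p => p.1)
          (fun p => p.2.2.2.2) K₂ p.1 p.2.2.2.2) +
        prob (tc.joint ch) (fun p => InfoExceeds (tc.joint ch) (fun p => p.2.1)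
          (fun p => p.1) K p.2.1 p.1) + K / L +
        (Fintype.card M₁ - 1) * (L * (1 / K₁)) + (Fintype.card M₂ - 1) * (1 / K₂) := by
  have hJ := tc.joint_mem_stdSimplex ch
  have hD₂ := prob_lawOf_infoExceeds_le hJ.1 (fun p => p.1) (fun p => p.2.2.2.2) hK₂
  rw [lawOf_joint_state] at hD₂
  obtain ⟨f₁, f₂, g₁, g₂, h_code⟩ := tc.exists_code_of_tests ch M₁ M₂
    (lawOf_mem_stdSimplex hJ fun p => p.2.1)
    (fun _ _ hs hv => tc.pV_eq_zero_of_lawOf_joint_eq_zero ch hs hv) hK hL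
    (prob_lawOf_infoExceeds_le hJ.1 (fun p => p.2.1) (fun p => p.2.2.2.1) hK₁) hD₂
  refine ⟨f₁, f₂, g₁, g₂, h_code.trans ?_⟩
  gcongr
  · exact prob_or_le hJ.1 _ _
  · exact (tc.prob_joint_infoExceeds_aux_state ch K).ge

end TestChannel

end InfoTests

section BlockCodes

variable {S V 𝒳₁ 𝒳₂ 𝒴₁ 𝒴₂ : Type} [Fintype S] [Fintype V] [Fintype 𝒳₁] [Fintype 𝒳₂]
  [Fintype 𝒴₁] [Fintype 𝒴₂]

namespace DMIFC

variable (ch : DMIFC 𝒳₁ 𝒳₂ 𝒴₁ 𝒴₂)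

/-- `n` uses of the channel without feedback, as a single use of a channel on blocks. -/
def memoryless (n : ℕ) : DMIFC (Fin n → 𝒳₁) (Fin n → 𝒳₂) (Fin n → 𝒴₁) (Fin n → 𝒴₂) where
  W x₁ x₂ y₁ y₂ := ∏ i, ch.W (x₁ i) (x₂ i) (y₁ i) (y₂ i)
  nonneg x₁ x₂ y₁ y₂ := Finset.prod_nonneg fun i _ => ch.nonneg (x₁ i) (x₂ i) (y₁ i) (y₂ i)
  sum_one x₁ x₂ := by
    have h_inner : ∀ y₁ : Fin n → 𝒴₁, ∑ y₂ : Fin n → 𝒴₂, ∏ i, ch.W (x₁ i) (x₂ i) (y₁ i) (y₂ i) =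
        ∏ i, ∑ b, ch.W (x₁ i) (x₂ i) (y₁ i) b := fun y₁ =>
      (Fintype.prod_sum fun i b => ch.W (x₁ i) (x₂ i) (y₁ i) b).symm
    simp only [h_inner]
    rw [← Fintype.prod_sum fun i a => ∑ b, ch.W (x₁ i) (x₂ i) a b]
    simp only [ch.sum_one, Finset.prod_const_one]

variable {n M₁ M₂ : ℕ} (f₁ : Fin M₁ → Fin M₂ → Fin n → 𝒳₁) (f₂ : Fin M₂ → Fin n → 𝒳₂)
  (g₁ : (Fin n → 𝒴₁) → Fin M₁) (g₂ : (Fin n → 𝒴₂) → Fin M₂)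

lemma pe1_eq_expVal :
    pe1 ch n M₁ M₂ f₁ f₂ g₁ = expVal (uniformLaw (Fin M₁ × Fin M₂)) fun w =>
      prob ((ch.memoryless n).out (f₁ w.1 w.2) (f₂ w.2)) fun y => g₁ y.1 ≠ w.1 := by
  simp only [ne_eq, prob_not, pe1, expVal, uniformLaw, out, memoryless, Fintype.sum_prod_type,
    Fintype.card_prod, Fintype.card_fin, Nat.cast_mul, one_div, Finset.mul_sum]

lemma pe2_eq_expVal :
    pe2 ch n M₁ M₂ f₁ f₂ g₂ = expVal (uniformLaw (Fin M₁ × Fin M₂)) fun w =>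
      prob ((ch.memoryless n).out (f₁ w.1 w.2) (f₂ w.2)) fun y => g₂ y.2 ≠ w.2 := by
  simp only [ne_eq, prob_not, pe2, expVal, uniformLaw, out, memoryless, Fintype.sum_prod_type,
    Fintype.card_prod, Fintype.card_fin, Nat.cast_mul, one_div, Finset.mul_sum]

lemma pe1_le_avgError :
    pe1 ch n M₁ M₂ f₁ f₂ g₁ ≤ (ch.memoryless n).avgError f₁ f₂ g₁ g₂ := by
  rw [pe1_eq_expVal, avgError]
  exact expVal_mono (uniformLaw_nonneg _) fun _ =>
    prob_mono (out_mem_stdSimplex _ _ _).1 fun _ => Or.inl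

lemma pe2_le_avgError :
    pe2 ch n M₁ M₂ f₁ f₂ g₂ ≤ (ch.memoryless n).avgError f₁ f₂ g₁ g₂ := by
  rw [pe2_eq_expVal ch f₁, avgError]
  exact expVal_mono (uniformLaw_nonneg _) fun _ =>
    prob_mono (out_mem_stdSimplex _ _ _).1 fun _ => Or.inr

end DMIFC

/-- Reading a block of tuples as a tuple of blocks. -/
def blockEquiv (n : ℕ) (S V 𝒳₁ 𝒴₁ 𝒴₂ : Type*) : (Fin n → S × V × 𝒳₁ × 𝒴₁ × 𝒴₂) ≃
    (Fin n → S) × (Fin n → V) × (Fin n → 𝒳₁) × (Fin n → 𝒴₁) × (Fin n → 𝒴₂) where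
  toFun ω := (fun i => (ω i).1, fun i => (ω i).2.1, fun i => (ω i).2.2.1,
    fun i => (ω i).2.2.2.1, fun i => (ω i).2.2.2.2)
  invFun b i := (b.1 i, b.2.1 i, b.2.2.1 i, b.2.2.2.1 i, b.2.2.2.2 i)
  left_inv _ := rfl
  right_inv _ := rfl

namespace TestChannel

variable (tc : TestChannel S V 𝒳₁ 𝒳₂) (ch : DMIFC 𝒳₁ 𝒳₂ 𝒴₁ 𝒴₂)

/-- The test channel used independently in each of `n` time slots. -/
def memoryless (n : ℕ) : TestChannel (Fin n → S) (Fin n → V) (Fin n → 𝒳₁) (Fin n → 𝒳₂) where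
  pS := piLaw fun _ => tc.pS
  pV s := piLaw fun i => tc.pV (s i)
  pX₁ v := piLaw fun i => tc.pX₁ (v i)
  x₂ s i := tc.x₂ (s i)
  pS_mem := piLaw_mem_stdSimplex fun _ => tc.pS_mem
  pV_mem s := piLaw_mem_stdSimplex fun i => tc.pV_mem (s i)
  pX₁_mem v := piLaw_mem_stdSimplex fun i => tc.pX₁_mem (v i)

lemma joint_memoryless (n : ℕ) (ω : Fin n → S × V × 𝒳₁ × 𝒴₁ × 𝒴₂) :
    (tc.memoryless n).joint (ch.memoryless n) (blockEquiv n S V 𝒳₁ 𝒴₁ 𝒴₂ ω) =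
      piLaw (fun _ => tc.joint ch) ω := by
  simp only [joint, memoryless, DMIFC.memoryless, DMIFC.out, compLaw, piLaw, blockEquiv,
    Equiv.coe_fn_mk, Finset.prod_mul_distrib]

end TestChannel

end BlockCodes

section CodeSize

/-- The number of messages of a block code of length `n` and rate at least `R`. -/
def codeSize (n : ℕ) (R : ℝ) : ℕ := ⌈(2 : ℝ) ^ (n * R)⌉₊

variable (n : ℕ) (R : ℝ)

lemma two_rpow_le_codeSize : (2 : ℝ) ^ (n * R) ≤ codeSize n R := Nat.le_ceil _

lemma codeSize_pos : 0 < codeSize n R := Nat.ceil_pos.mpr (by positivity)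

lemma codeSize_sub_one_le : (codeSize n R : ℝ) - 1 ≤ 2 ^ (n * R) :=
  sub_le_iff_le_add.mpr (Nat.ceil_lt_add_one (by positivity)).le

lemma codeSize_le_two_mul {R : ℝ} (hR : 0 ≤ R) : (codeSize n R : ℝ) ≤ 2 * 2 ^ (n * R) := by
  have h_one : (1 : ℝ) ≤ 2 ^ (n * R) := Real.one_le_rpow one_le_two (by positivity)
  linarith [codeSize_sub_one_le n R]

lemma le_logb_codeSize_div {n : ℕ} (hn : 0 < n) :
    R ≤ Real.logb 2 (codeSize n R) / n := by
  rw [le_div_iff₀ (Nat.cast_pos.mpr hn), mul_comm,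
    Real.le_logb_iff_rpow_le one_lt_two (Nat.cast_pos.mpr (codeSize_pos n R))]
  exact two_rpow_le_codeSize n R

end CodeSize

section Achievability

open Filter Topology

lemma tendsto_two_rpow_natCast_mul {a : ℝ} (ha : a < 0) :
    Tendsto (fun n : ℕ => (2 : ℝ) ^ (n * a)) atTop (𝓝 0) := by
  simp only [mul_comm _ a, Real.rpow_mul zero_le_two, Real.rpow_natCast]
  exact tendsto_pow_atTop_nhds_zero_of_lt_one (by positivity)
    (Real.rpow_lt_one_of_one_lt_of_neg one_lt_two ha)

lemma two_rpow_mul_div_codeSize_le (n : ℕ) (r ρ : ℝ) :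
    (2 : ℝ) ^ (n * r) / codeSize n ρ ≤ 2 ^ (n * (r - ρ)) := by
  rw [mul_sub, Real.rpow_sub two_pos]
  gcongr
  exact two_rpow_le_codeSize n ρ

lemma codeSize_sub_one_div_le (n : ℕ) (r ρ : ℝ) :
    ((codeSize n ρ : ℝ) - 1) * (1 / 2 ^ (n * r)) ≤ 2 ^ (n * (ρ - r)) := by
  rw [mul_one_div, mul_sub, Real.rpow_sub two_pos]
  gcongr
  exact codeSize_sub_one_le n ρ

lemma codeSize_sub_one_mul_codeSize_div_le (n : ℕ) (r ρ₁ : ℝ) {ρ : ℝ} (hρ : 0 ≤ ρ) :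
    ((codeSize n ρ₁ : ℝ) - 1) * (codeSize n ρ * (1 / 2 ^ (n * r))) ≤
      2 * 2 ^ (n * (ρ₁ + ρ - r)) := by
  calc ((codeSize n ρ₁ : ℝ) - 1) * (codeSize n ρ * (1 / 2 ^ (n * r)))
      ≤ 2 ^ (n * ρ₁) * (2 * 2 ^ (n * ρ) * (1 / 2 ^ (n * r))) := by
        gcongr
        · exact codeSize_sub_one_le n ρ₁
        · exact codeSize_le_two_mul n hρ
    _ = 2 * 2 ^ (n * (ρ₁ + ρ - r)) := by
        rw [mul_sub, mul_add, Real.rpow_sub two_pos, Real.rpow_add two_pos]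
        ring

variable {S V 𝒳₁ 𝒳₂ 𝒴₁ 𝒴₂ : Type} [Fintype S] [Fintype V] [Fintype 𝒳₁] [Fintype 𝒳₂]
  [Fintype 𝒴₁] [Fintype 𝒴₂] [DecidableEq S] [DecidableEq V] [DecidableEq 𝒴₁] [DecidableEq 𝒴₂]

namespace TestChannel

variable (tc : TestChannel S V 𝒳₁ 𝒳₂) (ch : DMIFC 𝒳₁ 𝒳₂ 𝒴₁ 𝒴₂)

/-- The error contributed by atypical blocks of length `n`: the information density of `(v, y₁)` or
of `(s, y₂)` is too small for the decoders, or that of `(v, s)` is too large for the encoder. -/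
def atypicalError (n : ℕ) (r r₁ r₂ : ℝ) : ℝ :=
  prob (piLaw fun _ : Fin n => tc.joint ch) (fun ω => ¬ InfoExceeds (piLaw fun _ => tc.joint ch)
    (fun ω i => (ω i).2.1) (fun ω i => (ω i).2.2.2.1) (2 ^ (n * r₁))
    (fun i => (ω i).2.1) fun i => (ω i).2.2.2.1) +
  prob (piLaw fun _ : Fin n => tc.joint ch) (fun ω => ¬ InfoExceeds (piLaw fun _ => tc.joint ch)
    (fun ω i => (ω i).1) (fun ω i => (ω i).2.2.2.2) (2 ^ (n * r₂))
    (fun i => (ω i).1) fun i => (ω i).2.2.2.2) +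
  prob (piLaw fun _ : Fin n => tc.joint ch) (fun ω => InfoExceeds (piLaw fun _ => tc.joint ch)
    (fun ω i => (ω i).2.1) (fun ω i => (ω i).1) (2 ^ (n * r))
    (fun i => (ω i).2.1) fun i => (ω i).1)

lemma tendsto_atypicalError {r r₁ r₂ : ℝ}
    (hr : miRV (tc.joint ch) (fun p => p.2.1) (fun p => p.1) < r)
    (hr₁ : r₁ < miRV (tc.joint ch) (fun p => p.2.1) fun p => p.2.2.2.1)
    (hr₂ : r₂ < miRV (tc.joint ch) (fun p => p.1) fun p => p.2.2.2.2) :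
    Tendsto (fun n => tc.atypicalError ch n r r₁ r₂) atTop (𝓝 0) := by
  have hJ := tc.joint_mem_stdSimplex ch
  simpa only [atypicalError, add_zero] using
    ((tendsto_prob_not_infoExceeds_of_lt_miRV hJ _ _ hr₁).add
      (tendsto_prob_not_infoExceeds_of_lt_miRV hJ _ _ hr₂)).add
      (tendsto_prob_infoExceeds_of_miRV_lt hJ _ _ hr)

lemma exists_code_memoryless_avgError_le (n : ℕ) (r r₁ r₂ : ℝ) (M₁ M₂ : Type*) [Fintype M₁]
    [Fintype M₂] [Nonempty M₁] [Nonempty M₂] {L : ℕ} (hL : 0 < L) :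
    ∃ (f₁ : M₁ → M₂ → Fin n → 𝒳₁) (f₂ : M₂ → Fin n → 𝒳₂) (g₁ : (Fin n → 𝒴₁) → M₁)
      (g₂ : (Fin n → 𝒴₂) → M₂), (ch.memoryless n).avgError f₁ f₂ g₁ g₂ ≤
        tc.atypicalError ch n r r₁ r₂ + 2 ^ (n * r) / L +
          (Fintype.card M₁ - 1) * (L * (1 / 2 ^ (n * r₁))) +
          (Fintype.card M₂ - 1) * (1 / 2 ^ (n * r₂)) := by
  obtain ⟨f₁, f₂, g₁, g₂, h_code⟩ :=
    (tc.memoryless n).exists_code_avgError_le (ch.memoryless n) M₁ M₂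
      (K := 2 ^ (n * r)) (K₁ := 2 ^ (n * r₁)) (K₂ := 2 ^ (n * r₂))
      (by positivity) (by positivity) (by positivity) hL
  simp only [prob_comp_equiv (blockEquiv n S V 𝒳₁ 𝒴₁ 𝒴₂) (tc.joint_memoryless ch n),
    infoExceeds_comp_equiv (blockEquiv n S V 𝒳₁ 𝒴₁ 𝒴₂) (tc.joint_memoryless ch n)] at h_code
  exact ⟨f₁, f₂, g₁, g₂, h_code⟩

lemma exists_code_codeSize_pe_le (n : ℕ) (r r₁ r₂ ρ₁ ρ₂ : ℝ) {ρ : ℝ} (hρ : 0 ≤ ρ) :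
    ∃ (f₁ : Fin (codeSize n ρ₁) → Fin (codeSize n ρ₂) → Fin n → 𝒳₁)
      (f₂ : Fin (codeSize n ρ₂) → Fin n → 𝒳₂) (g₁ : (Fin n → 𝒴₁) → Fin (codeSize n ρ₁))
      (g₂ : (Fin n → 𝒴₂) → Fin (codeSize n ρ₂)),
      max (pe1 ch n _ _ f₁ f₂ g₁) (pe2 ch n _ _ f₁ f₂ g₂) ≤
        tc.atypicalError ch n r r₁ r₂ + 2 ^ (n * (r - ρ)) + 2 * 2 ^ (n * (ρ₁ + ρ - r₁)) +
          2 ^ (n * (ρ₂ - r₂)) := by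
  have : NeZero (codeSize n ρ₁) := ⟨(codeSize_pos n ρ₁).ne'⟩
  have : NeZero (codeSize n ρ₂) := ⟨(codeSize_pos n ρ₂).ne'⟩
  obtain ⟨f₁, f₂, g₁, g₂, h_code⟩ := tc.exists_code_memoryless_avgError_le ch n r r₁ r₂
    (Fin (codeSize n ρ₁)) (Fin (codeSize n ρ₂)) (codeSize_pos n ρ)
  refine ⟨f₁, f₂, g₁, g₂, (max_le (ch.pe1_le_avgError f₁ f₂ g₁ g₂)
    (ch.pe2_le_avgError f₁ f₂ g₁ g₂)).trans (h_code.trans ?_)⟩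
  rw [Fintype.card_fin, Fintype.card_fin]
  exact add_le_add (add_le_add (add_le_add le_rfl (two_rpow_mul_div_codeSize_le n r ρ))
    (codeSize_sub_one_mul_codeSize_div_le n r₁ ρ₁ hρ)) (codeSize_sub_one_div_le n r₂ ρ₂)

lemma tendsto_error_bound {r r₁ r₂ ρ ρ₁ ρ₂ : ℝ}
    (hr : miRV (tc.joint ch) (fun p => p.2.1) (fun p => p.1) < r)
    (hr₁ : r₁ < miRV (tc.joint ch) (fun p => p.2.1) fun p => p.2.2.2.1)
    (hr₂ : r₂ < miRV (tc.joint ch) (fun p => p.1) fun p => p.2.2.2.2)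
    (hρ : r < ρ) (hρ₁ : ρ₁ + ρ < r₁) (hρ₂ : ρ₂ < r₂) :
    Tendsto (fun n : ℕ => tc.atypicalError ch n r r₁ r₂ + 2 ^ (n * (r - ρ)) +
      2 * 2 ^ (n * (ρ₁ + ρ - r₁)) + 2 ^ (n * (ρ₂ - r₂))) atTop (𝓝 0) := by
  simpa only [add_zero, mul_zero] using
    (((tc.tendsto_atypicalError ch hr hr₁ hr₂).add
      (tendsto_two_rpow_natCast_mul (sub_neg.mpr hρ))).add
      ((tendsto_two_rpow_natCast_mul (sub_neg.mpr hρ₁)).const_mul 2)).add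
      (tendsto_two_rpow_natCast_mul (sub_neg.mpr hρ₂))

lemma achievableT1_of_le_miRV {R₁ R₂ : ℝ}
    (hR₁ : R₁ ≤ miRV (tc.joint ch) (fun p => p.2.1) (fun p => p.2.2.2.1) -
      miRV (tc.joint ch) (fun p => p.2.1) (fun p => p.1))
    (hR₂ : R₂ ≤ miRV (tc.joint ch) (fun p => p.1) fun p => p.2.2.2.2) :
    AchievableT1 ch R₁ R₂ := by
  intro ε hε
  have hI := miRV_nonneg (tc.joint_mem_stdSimplex ch) (fun p => p.2.1) fun p => p.1
  set I := miRV (tc.joint ch) (fun p => p.2.1) fun p => p.1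
  have h_small := (tc.tendsto_error_bound ch (r := I + ε / 4) (ρ := I + ε / 2)
    (r₁ := miRV (tc.joint ch) (fun p => p.2.1) (fun p => p.2.2.2.1) - ε / 4) (ρ₁ := R₁ - ε)
    (r₂ := miRV (tc.joint ch) (fun p => p.1) (fun p => p.2.2.2.2) - ε / 4) (ρ₂ := R₂ - ε)
    (by linarith) (by linarith) (by linarith) (by linarith) (by linarith)
    (by linarith)).eventually_le_const hε
  obtain ⟨n, h_le, hn⟩ := (h_small.and (eventually_gt_atTop 0)).exists
  obtain ⟨f₁, f₂, g₁, g₂, h_code⟩ := tc.exists_code_codeSize_pe_le ch n _ _ _ (R₁ - ε) (R₂ - ε)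
    (by linarith : 0 ≤ I + ε / 2)
  obtain ⟨h_pe₁, h_pe₂⟩ := max_le_iff.mp (h_code.trans h_le)
  exact ⟨n, _, _, f₁, f₂, g₁, g₂, hn, codeSize_pos n _, codeSize_pos n _,
    le_logb_codeSize_div _ hn, le_logb_codeSize_div _ hn, h_pe₁, h_pe₂⟩

end TestChannel

end Achievability

section Region

variable {𝒳₁ 𝒳₂ 𝒴₁ 𝒴₂ : Type}

/-- The coordinates `((u, x₂), v, x₁, y₁, y₂)` of `TestChannel.joint` in the order
`(u, v, x₁, x₂, y₁, y₂)` of `jointIn`. -/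
def jointInEquiv (U V 𝒳₁ 𝒳₂ 𝒴₁ 𝒴₂ : Type*) :
    (U × 𝒳₂) × V × 𝒳₁ × 𝒴₁ × 𝒴₂ ≃ U × V × 𝒳₁ × 𝒳₂ × 𝒴₁ × 𝒴₂ where
  toFun p := (p.1.1, p.2.1, p.2.2.1, p.1.2, p.2.2.2.1, p.2.2.2.2)
  invFun p := ((p.1, p.2.2.2.1), p.2.1, p.2.2.1, p.2.2.2.2.1, p.2.2.2.2.2)
  left_inv _ := rfl
  right_inv _ := rfl

variable [Fintype 𝒳₁] [Fintype 𝒳₂] [Fintype 𝒴₁] [Fintype 𝒴₂]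

lemma jointIn_jointInEquiv (ch : DMIFC 𝒳₁ 𝒳₂ 𝒴₁ 𝒴₂) {nU nV : ℕ}
    (tc : TestChannel (Fin nU × 𝒳₂) (Fin nV) 𝒳₁ 𝒳₂) (hx₂ : tc.x₂ = Prod.snd)
    (p : (Fin nU × 𝒳₂) × Fin nV × 𝒳₁ × 𝒴₁ × 𝒴₂) :
    jointIn ch nU nV (fun u x₂ => tc.pS (u, x₂)) (fun u x₂ => tc.pV (u, x₂)) tc.pX₁
      (jointInEquiv (Fin nU) (Fin nV) 𝒳₁ 𝒳₂ 𝒴₁ 𝒴₂ p) = tc.joint ch p := by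
  simp only [jointIn, jointInEquiv, Equiv.coe_fn_mk, TestChannel.joint, compLaw, DMIFC.out, hx₂,
    mul_assoc]

end Region

/-- **Theorem 1 (achievability).**  For every two-user discrete memoryless interference
channel with degraded message sets in which transmitter 1 knows both messages, the
region `ℛ_in` is achievable: `ℛ_in ⊆ C^{T₁}_{IFC}`. -/
theorem Rin_subset_capacityT1 (ch : DMIFC X1 X2 Y1 Y2) : Rin ch ⊆ CapacityT1 ch := by
  rintro ⟨R₁, R₂⟩ ⟨nU, nV, pUX2, pV, pX1, hU, hU1, hV, hV1, hX, hX1, hR₁, hR₂⟩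
  let tc : TestChannel (Fin nU × X2) (Fin nV) X1 X2 :=
    { pS := fun s => pUX2 s.1 s.2
      pV := fun s => pV s.1 s.2
      pX₁ := pX1
      x₂ := Prod.snd
      pS_mem := ⟨fun s => hU s.1 s.2, (Fintype.sum_prod_type _).trans hU1⟩
      pV_mem := fun s => ⟨hV s.1 s.2, hV1 s.1 s.2⟩
      pX₁_mem := fun v => ⟨hX v, hX1 v⟩ }
  have h_joint := jointIn_jointInEquiv ch tc rfl
  rw [miRV_comp_equiv _ h_joint, miRV_comp_equiv _ h_joint] at hR₁
  rw [miRV_comp_equiv _ h_joint] at hR₂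
  exact subset_closure (tc.achievableT1_of_le_miRV ch hR₁ hR₂)
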